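/- For every η > 0 and all positive integers d₁, d₂ there exist κ > 0 and a constant C = C(η, d₁, d₂) such that the following holds for every prime p. Let χ be a non-trivial multiplicative character modulo p, let ψ be a non-trivial additive character of 𝔽_p, let P ∈ 𝔽_p(X) be a rational function whose numerator and denominator have degree at most d₁, and let Q ∈ 𝔽_p(X, Y) be a rational function whose numerator and denominator have total degree at most d₂. Then for all real K, M, N with p^{1/5 + η} ≤ K, M, N < p^{1/4 − η}, one has |∑_{1 ≤ k ≤ K} ∑_{1 ≤ m ≤ M} ∑_{1 ≤ n ≤ N} χ(k + m·n) · ψ(P(m) + Q(k, n))| ≤ C·K·M·N·p^{−κ}, where terms with m a pole of P, or (k, n) a pole of Q, are omitted from the sum. -/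

import Mathlib

open Finset

/-!
The weights `ψ (P m)` and `ψ (Q (k, n))` have absolute value at most `1` and depend on `m` alone and
on `(k, n)` alone, so the Cauchy–Schwarz inequality over `(k, n)` removes them and leaves, for each
pair `(m, m')`, the correlation of `χ (k + m * n)` with `χ (k + m' * n)`. Shifting `(k, n)` by
`(a * t, b * t)` and pulling out `χ (a + m * b)` turns it into an average of the short sums
`∑ t, χ (z + t) * conj (χ (z' + t))`, where `z` and `z'` are the fractions
`(k + m * n) / (a + m * b)` and `(k + m' * n) / (a + m' * b)` modulo `p`. The lengths are so short
that coincidences of such fractions modulo `p` are coincidences of rational numbers, which the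
divisor bound counts. Hölder's inequality then leaves a high moment of the short sums over all
`z` and `z'`, which Weil's bound for complete character sums controls.

Weil's bound comes from Stepanov's method over the extensions of even degree: it bounds the even
power sums of the zeros of the `L`-function, a polynomial, hence every single zero.
-/

section Stepanov

open Polynomial

variable {F : Type*} [Field F]

/-- The auxiliary polynomial of Stepanov's method for `y ^ d = f(x)` over the field with `Q ^ 2`
elements, where `Q = d * w + 1`: a combination of the monomials `X ^ (Q * i) * f ^ (w * j)` with
`j < d`, enumerated by `l = d * i + j`, with coefficients `r l` of degree `< w`. -/
noncomputable def stepanovPoly (Q d w : ℕ) (f : F[X]) {L : ℕ} (r : Fin L → F[X]) : F[X] :=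
  ∑ l, r l * X ^ (Q * (l / d)) * (f ^ w) ^ (l % d : ℕ)

/-- A polynomial of low degree which agrees with `f ^ ((d - 1) * w) * stepanovPoly Q d w f r ^ Q`
at each point `x` of the field with `Q ^ 2` elements satisfying `f(x) ^ (w * (Q + 1)) = c`. -/
noncomputable def stepanovReduced (Q d w : ℕ) (f : F[X]) (c : F) {L : ℕ} (r : Fin L → F[X]) :
    F[X] :=
  ∑ l, r l ^ Q * X ^ (l / d : ℕ) * C (c ^ (l % d : ℕ)) * f ^ ((d - 1 - l % d) * w)

lemma eq_zero_of_sum_mul_X_pow_mul_eq_zero {ι : Type*} [LinearOrder ι] {s : Finset ι} {w : ℕ}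
    {a : ι → ℕ} (ha : ∀ i j, i < j → a i + w ≤ a j) {r h : ι → F[X]}
    (hr : ∀ i, (r i).degree < w) (hh : ∀ i, (h i).eval 0 ≠ 0)
    (hsum : ∑ i ∈ s, r i * X ^ a i * h i = 0) : ∀ i ∈ s, r i = 0 := by
  classical
  by_contra! hex
  obtain ⟨i, hi, hmin⟩ := (s.filter (r · ≠ 0)).exists_minimal (by simpa [Finset.Nonempty] using hex)
  obtain ⟨his, hri⟩ := mem_filter.mp hi
  have hrest : (X : F[X]) ^ (a i + w) ∣ ∑ j ∈ s.erase i, r j * X ^ a j * h j := by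
    refine dvd_sum fun j hj => ?_
    obtain ⟨hji, hjs⟩ := mem_erase.mp hj
    by_cases hrj : r j = 0
    · simp [hrj]
    · have hij : i < j := (hji.symm.lt_or_gt).resolve_right fun hlt =>
        hlt.not_ge (hmin (mem_filter.mpr ⟨hjs, hrj⟩) hlt.le)
      exact ((pow_dvd_pow X (ha i j hij)).mul_left _).mul_right _
  have hterm : (X : F[X]) ^ (a i + w) ∣ r i * X ^ a i * h i := by
    rw [← add_sum_erase s _ his] at hsum
    rw [eq_neg_of_add_eq_zero_left hsum]
    exact hrest.neg_right
  have hcop : IsCoprime (X ^ w) (h i) := by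
    refine IsCoprime.pow_left (irreducible_X.coprime_iff_not_dvd.mpr ?_)
    rw [X_dvd_iff, coeff_zero_eq_eval_zero]
    exact hh i
  have hdvd : X ^ w ∣ r i := by
    rw [pow_add, mul_comm (r i), mul_assoc] at hterm
    exact hcop.dvd_of_dvd_mul_right
      ((mul_dvd_mul_iff_left (pow_ne_zero _ X_ne_zero)).mp hterm)
  have hdeg := degree_le_of_dvd hdvd hri
  rw [degree_X_pow] at hdeg
  exact (hr i).not_ge hdeg

lemma natDegree_le_pred_of_degree_lt {w : ℕ} {r : F[X]} (hr : r.degree < w) :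
    r.natDegree ≤ w - 1 := by
  by_cases h : r = 0
  · simp [h]
  · rw [← natDegree_lt_iff_degree_lt h] at hr
    omega

section

variable {Q d w D L : ℕ} {f g : F[X]}

lemma X_pow_mul_stepanov_exponent (hQ : Q = d * w + 1) (g : F[X]) (l : ℕ) :
    X ^ (Q * (l / d)) * ((X * g) ^ w) ^ (l % d) =
      X ^ (w * l + l / d) * (g ^ w) ^ (l % d) := by
  rw [mul_pow, mul_pow, ← mul_assoc, ← pow_mul, ← pow_add]
  congr 2
  conv_rhs => rw [← Nat.div_add_mod l d]
  obtain rfl | hd := d.eq_zero_or_pos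
  · simp [hQ]
  rw [hQ, Nat.mul_add_div hd, Nat.mod_div_self]
  ring

lemma stepanovPoly_ne_zero (hQ : Q = d * w + 1) (hg : g.eval 0 ≠ 0) {r : Fin L → F[X]}
    (hr : ∀ l, (r l).degree < w) (hr0 : r ≠ 0) : stepanovPoly Q d w (X * g) r ≠ 0 := by
  contrapose! hr0
  simp only [stepanovPoly, mul_assoc, X_pow_mul_stepanov_exponent hQ] at hr0
  simp only [← mul_assoc] at hr0
  refine funext fun l => eq_zero_of_sum_mul_X_pow_mul_eq_zero
    (a := fun l : Fin L => w * (l : ℕ) + l / d) (h := fun l : Fin L => (g ^ w) ^ (l % d : ℕ))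
    (fun i j hij => ?_) hr (fun i => ?_) hr0 l (mem_univ l)
  · have hdiv : (i : ℕ) / d ≤ j / d := Nat.div_le_div_right (Fin.le_def.mp hij.le)
    have hmul : w * (i + 1 : ℕ) ≤ w * j := Nat.mul_le_mul_left _ hij
    linarith [mul_add_one w (i : ℕ)]
  · simp only [eval_pow]
    exact pow_ne_zero _ (pow_ne_zero _ hg)

lemma natDegree_stepanovReduced_le (hf : f.natDegree ≤ D) (c : F) {r : Fin L → F[X]}
    (hr : ∀ l, (r l).degree < w) :
    (stepanovReduced Q d w f c r).natDegree ≤ (w - 1) * Q + L / d + D * (d * w) := by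
  refine natDegree_sum_le_of_forall_le _ _ fun l _ => ?_
  have hdiv : (l : ℕ) / d ≤ L / d := Nat.div_le_div_right l.2.le
  have hexp : (d - 1 - l % d) * w * D ≤ d * w * D := by gcongr; omega
  calc (r l ^ Q * X ^ (l / d : ℕ) * C (c ^ (l % d : ℕ)) * f ^ ((d - 1 - l % d) * w)).natDegree
      ≤ Q * (w - 1) + l / d + 0 + (d - 1 - l % d) * w * D :=
        natDegree_mul_le_of_le (natDegree_mul_le_of_le (natDegree_mul_le_of_le
          (natDegree_pow_le_of_le _ (natDegree_le_pred_of_degree_lt (hr l)))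
          (natDegree_X_pow_le _)) (natDegree_C _).le) (natDegree_pow_le_of_le _ hf)
    _ ≤ (w - 1) * Q + L / d + D * (d * w) := by linarith

lemma natDegree_stepanovPoly_le (hd : 1 ≤ d) (hQ : Q = d * w + 1) (hf : f.natDegree ≤ D)
    {r : Fin L → F[X]} (hr : ∀ l, (r l).degree < w) :
    (stepanovPoly Q d w f r).natDegree ≤ w + Q * (L / d) + Q * D := by
  refine natDegree_sum_le_of_forall_le _ _ fun l _ => ?_
  have hdiv : (l : ℕ) / d ≤ L / d := Nat.div_le_div_right l.2.le
  have hmod : (l : ℕ) % d ≤ d := (Nat.mod_lt _ hd).le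
  calc (r l * X ^ (Q * (l / d)) * (f ^ w) ^ (l % d : ℕ)).natDegree
      ≤ (w - 1) + Q * (l / d) + l % d * (w * D) :=
        natDegree_mul_le_of_le (natDegree_mul_le_of_le
          (natDegree_le_pred_of_degree_lt (hr l)) (natDegree_X_pow_le _))
          (natDegree_pow_le_of_le _ (natDegree_pow_le_of_le _ hf))
    _ ≤ w + Q * (L / d) + d * (w * D) := by gcongr; omega
    _ ≤ w + Q * (L / d) + Q * D := by
        rw [← mul_assoc d]
        gcongr
        omega

lemma stepanovReduced_sub {p s : ℕ} [Fact p.Prime] [CharP F p] (f : F[X]) (c : F)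
    (r r' : Fin L → F[X]) :
    stepanovReduced (p ^ s) d w f c (r - r') =
      stepanovReduced (p ^ s) d w f c r - stepanovReduced (p ^ s) d w f c r' := by
  simp only [stepanovReduced, Pi.sub_apply, sub_pow_char_pow, sub_mul, sum_sub_distrib]

lemma eval_stepanovReduced {p s : ℕ} [Fact p.Prime] [CharP F p] (hQ : Q = p ^ s) (hd : 1 ≤ d)
    (r : Fin L → F[X]) {x : F} (hx : x ^ Q ^ 2 = x) :
    (stepanovReduced Q d w f (f.eval x ^ (w * (Q + 1))) r).eval x =
      f.eval x ^ ((d - 1) * w) * (stepanovPoly Q d w f r).eval x ^ Q := by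
  simp only [stepanovReduced, stepanovPoly, eval_finsetSum]
  conv_rhs => rw [hQ, sum_pow_char_pow, ← hQ, mul_sum]
  refine sum_congr rfl fun l _ => ?_
  have hXpow : (x ^ (Q * (l / d))) ^ Q = x ^ (l / d : ℕ) := by
    rw [← pow_mul, show Q * (l / d) * Q = Q ^ 2 * (l / d) by ring, pow_mul, hx]
  obtain ⟨j, hj⟩ := Nat.exists_eq_add_of_le (Nat.le_sub_one_of_lt (Nat.mod_lt l hd))
  simp only [eval_mul, eval_pow, eval_X, eval_C, mul_pow, hXpow]
  rw [hj, Nat.add_sub_cancel_left]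
  ring

end

lemma exists_ne_zero_map_eq_zero_of_natCard_lt {G H : Type*} [AddGroup G] [AddGroup H] [Finite H]
    (φ : G →+ H) (h : Nat.card H < Nat.card G) : ∃ x ≠ 0, φ x = 0 := by
  by_contra! hφ
  exact h.not_ge (Nat.card_le_card_of_injective φ
    ((injective_iff_map_eq_zero φ).mpr fun x hx => by_contra fun hx0 => hφ x hx0 hx))

lemma natCard_degreeLT [Finite F] (n : ℕ) : Nat.card (degreeLT F n) = Nat.card F ^ n := by
  rw [Nat.card_congr (degreeLTEquiv F n).toEquiv, Nat.card_fun, Nat.card_fin]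

lemma exists_stepanovReduced_eq_zero [Finite F] {p s : ℕ} [Fact p.Prime] [CharP F p]
    {d w D L : ℕ} {f : F[X]} (hf : f.natDegree ≤ D) (c : F)
    (hcard : (w - 1) * p ^ s + L / d + D * (d * w) + 1 < L * w) :
    ∃ r : Fin L → F[X], (∀ l, (r l).degree < w) ∧ r ≠ 0 ∧
      stepanovReduced (p ^ s) d w f c r = 0 := by
  set R := (w - 1) * p ^ s + L / d + D * (d * w) + 1
  have hdeg (ρ : Fin L → degreeLT F w) (l : Fin L) : (ρ l : F[X]).degree < w :=
    mem_degreeLT.mp (ρ l).2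
  let φ : (Fin L → degreeLT F w) →+ degreeLT F R := AddMonoidHom.ofMapSub
    (fun ρ => ⟨stepanovReduced (p ^ s) d w f c fun l => ρ l, mem_degreeLT.mpr
      ((degree_le_natDegree).trans_lt (by
        exact_mod_cast Nat.lt_succ_of_le (natDegree_stepanovReduced_le hf c (hdeg ρ))))⟩)
    fun ρ ρ' => Subtype.ext (stepanovReduced_sub f c (fun l => (ρ l : F[X])) fun l => ρ' l)
  have : Finite (degreeLT F R) := .of_equiv _ (degreeLTEquiv F R).symm.toEquiv
  obtain ⟨ρ, hρ0, hρ⟩ := exists_ne_zero_map_eq_zero_of_natCard_lt φ (by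
    rw [Nat.card_fun, natCard_degreeLT, natCard_degreeLT, Nat.card_fin, ← pow_mul, mul_comm w]
    exact Nat.pow_lt_pow_right Finite.one_lt_card hcard)
  refine ⟨fun l => ρ l, hdeg ρ, fun h => hρ0 ?_, congrArg Subtype.val hρ⟩
  exact funext fun l => Subtype.ext (congrFun h l)

lemma card_pow_eval_eq_le [Fintype F] [DecidableEq F] {p s Q d w D : ℕ} [Fact p.Prime]
    [CharP F p] (hQp : Q = p ^ s) (hcard : Fintype.card F = Q ^ 2) (hQ : Q = d * w + 1)
    (hlarge : (d + 1) * (D + 2) + 2 ≤ Q) {g : F[X]} (hg : g.eval 0 ≠ 0)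
    (hD : (X * g).natDegree ≤ D) (c : F) :
    #{x : F | (X * g).eval x ≠ 0 ∧ (X * g).eval x ^ (w * (Q + 1)) = c} ≤
      w * Q + (2 * D + 3) * Q := by
  subst hQp
  have hd : 1 ≤ d := by
    by_contra! h
    obtain rfl : d = 0 := by omega
    omega
  have hdiv : (p ^ s + d * (D + 1)) / d ≤ w + D + 2 := by
    rw [hQ, show d * w + 1 + d * (D + 1) = 1 + d * (w + (D + 1)) by ring,
      Nat.add_mul_div_left _ _ hd]
    have := Nat.div_le_self 1 d
    omega
  have hparam : (w - 1) * p ^ s + (p ^ s + d * (D + 1)) / d + D * (d * w) + 1 <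
      (p ^ s + d * (D + 1)) * w := by
    have hw : 1 ≤ w := Nat.pos_of_ne_zero fun h => by subst h; nlinarith
    obtain ⟨v, rfl⟩ := Nat.exists_eq_add_of_le' hw
    rw [Nat.add_sub_cancel]
    nlinarith [Nat.zero_le (d * D), Nat.zero_le (d * v)]
  obtain ⟨r, hr, hr0, hV⟩ := exists_stepanovReduced_eq_zero hD c hparam
  have hU0 := stepanovPoly_ne_zero hQ hg hr hr0
  have hroots : ({x : F | (X * g).eval x ≠ 0 ∧ (X * g).eval x ^ (w * (p ^ s + 1)) = c} : Finset F) ⊆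
      (stepanovPoly (p ^ s) d w (X * g) r).roots.toFinset := by
    intro x hx
    obtain ⟨hfx, rfl⟩ := (mem_filter.mp hx).2
    have heval := eval_stepanovReduced (f := X * g) (w := w) (x := x) rfl hd r
      (by rw [← hcard, FiniteField.pow_card])
    rw [hV, eval_zero, eq_comm, mul_eq_zero_iff_left (pow_ne_zero _ hfx)] at heval
    exact Multiset.mem_toFinset.mpr ((mem_roots hU0).mpr (pow_eq_zero_iff (by omega) |>.mp heval))
  calc _ ≤ (stepanovPoly (p ^ s) d w (X * g) r).natDegree :=
        (card_le_card hroots).trans ((Multiset.toFinset_card_le _).trans (card_roots' _))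
    _ ≤ w + p ^ s * ((p ^ s + d * (D + 1)) / d) + p ^ s * D :=
        natDegree_stepanovPoly_le hd hQ hD hr
    _ ≤ w + p ^ s * (w + D + 2) + p ^ s * D := by gcongr
    _ ≤ w * p ^ s + (2 * D + 3) * p ^ s := by nlinarith

end Stepanov

section SumOverExtension

open Polynomial

lemma sum_nthRootsFinset_one {R : Type*} [CommRing R] [IsDomain R] {n : ℕ} {ζ : R}
    (hζ : IsPrimitiveRoot ζ n) (hn : 1 < n) : ∑ z ∈ nthRootsFinset n (1 : R), z = 0 := by
  classical
  rw [nthRootsFinset_def, ← Multiset.toFinset_eq hζ.nthRoots_one_nodup, ← sum_map_val]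
  simpa [hζ.nthRoots_eq (one_pow n), Finset.sum] using hζ.geom_sum_eq_zero hn

lemma norm_sum_le_of_card_fiber_le {α : Type*} {s : Finset α} {h : α → ℂ} {d B : ℕ} (hd : 1 < d)
    (hh : ∀ x ∈ s, h x ^ d = 1) (hB : ∀ z, #{x ∈ s | h x = z} ≤ B) :
    ‖∑ x ∈ s, h x‖ ≤ d * B - #s := by
  have hd0 : 0 < d := by omega
  have hζ := Complex.isPrimitiveRoot_exp d hd0.ne'
  have hmaps : ∀ x ∈ s, h x ∈ nthRootsFinset d (1 : ℂ) := fun x hx =>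
    (Polynomial.mem_nthRootsFinset hd0 1).mpr (hh x hx)
  have hsum : ∑ x ∈ s, h x =
      -∑ z ∈ nthRootsFinset d (1 : ℂ), ((B - #{x ∈ s | h x = z} : ℝ) : ℂ) * z := by
    simp only [Complex.ofReal_sub, Complex.ofReal_natCast, sub_mul]
    rw [sum_sub_distrib, ← mul_sum, sum_nthRootsFinset_one hζ hd, mul_zero, zero_sub, neg_neg,
      ← sum_fiberwise_of_maps_to hmaps]
    refine sum_congr rfl fun z _ => ?_
    rw [sum_congr rfl fun x hx => (mem_filter.mp hx).2, sum_const, nsmul_eq_mul]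
  calc ‖∑ x ∈ s, h x‖ ≤ ∑ z ∈ nthRootsFinset d (1 : ℂ), ((B : ℝ) - #{x ∈ s | h x = z}) := by
        rw [hsum, norm_neg]
        refine norm_sum_le_of_le _ fun z hz => ?_
        have hz1 : ‖z‖ = 1 := Complex.norm_eq_one_of_pow_eq_one
          ((Polynomial.mem_nthRootsFinset hd0 1).mp hz) hd0.ne'
        have hBz : (#{x ∈ s | h x = z} : ℝ) ≤ B := by exact_mod_cast hB z
        rw [norm_mul, hz1, mul_one, Complex.norm_real, Real.norm_of_nonneg (sub_nonneg.mpr hBz)]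
    _ = d * B - #s := by
        rw [sum_sub_distrib, sum_const, hζ.card_nthRootsFinset, nsmul_eq_mul,
          card_eq_sum_card_fiberwise hmaps, Nat.cast_sum]

section

variable {K : Type*} [Field K] [Fintype K]

lemma exists_mul_eq_card_sub_one_of_mulChar {χ : MulChar K ℂ} (hχ : χ ≠ 1) :
    ∃ d e : ℕ, 1 < d ∧ d * e = Fintype.card K - 1 ∧ (∀ a ≠ 0, χ a ^ d = 1) ∧
      ∀ a ≠ 0, ∀ b ≠ 0, χ a = χ b → a ^ e = b ^ e := by
  classical
  let φ := χ.toUnitHom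
  have : Finite φ.range := inferInstance
  refine ⟨Nat.card φ.range, Nat.card φ.ker, ?_, ?_, fun a ha => ?_, fun a ha b hb hab => ?_⟩
  · obtain ⟨a, ha⟩ := MulChar.ne_one_iff.mp hχ
    refine Finite.one_lt_card_iff_nontrivial.mpr ⟨⟨φ a, a, rfl⟩, 1, fun h => ha ?_⟩
    rw [← MulChar.coe_toUnitHom, ← Units.val_one]
    exact congrArg Units.val (congrArg Subtype.val h)
  · rw [← Subgroup.index_ker, Subgroup.index_mul_card, Nat.card_eq_fintype_card,
      Fintype.card_units]
  · have h : (⟨φ (Units.mk0 a ha), _, rfl⟩ : φ.range) ^ Nat.card φ.range = 1 := pow_card_eq_one'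
    have hval := congrArg (fun z : φ.range => ((z : ℂˣ) : ℂ)) h
    simpa only [SubgroupClass.coe_pow, Units.val_pow_eq_pow_val, φ, MulChar.coe_toUnitHom,
      Units.val_mk0, OneMemClass.coe_one, Units.val_one] using hval
  · have hker : Units.mk0 a ha / Units.mk0 b hb ∈ φ.ker := by
      rw [MonoidHom.mem_ker, _root_.map_div, div_eq_one]
      exact Units.ext (by simpa only [φ, MulChar.coe_toUnitHom, Units.val_mk0] using hab)
    have h : (⟨_, hker⟩ : φ.ker) ^ Nat.card φ.ker = 1 := pow_card_eq_one'
    have hpow := congrArg (fun z : φ.ker => ((z : Kˣ) : K)) h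
    simp only [SubmonoidClass.mk_pow, div_pow, Units.val_div_eq_div_val, Units.val_pow_eq_pow_val,
      Units.val_mk0, OneMemClass.coe_one, Units.val_one] at hpow
    exact eq_of_div_eq_one hpow

variable {F : Type*} [Field F] [Fintype F] [Algebra K F]

lemma algebraMap_norm_pow_eq {Q e u : ℕ} (hF : Fintype.card F = Q ^ 2)
    (hu : Q - 1 = (Fintype.card K - 1) * u) (y : F) :
    algebraMap K F (Algebra.norm K y ^ e) = y ^ (e * u * (Q + 1)) := by
  have hdiv : (Fintype.card F - 1) / (Fintype.card K - 1) = u * (Q + 1) := by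
    refine Nat.div_eq_of_eq_mul_right (Nat.sub_pos_of_lt Fintype.one_lt_card) ?_
    rw [hF, ← mul_assoc, ← hu, mul_comm, ← Nat.sq_sub_sq, one_pow]
  rw [map_pow, FiniteField.algebraMap_norm_eq_pow, Nat.card_eq_fintype_card,
    Nat.card_eq_fintype_card, hdiv, ← pow_mul]
  congr 1
  ring

lemma card_mulChar_norm_eval_eq_le [DecidableEq F] {χ : MulChar K ℂ} {Q d e u j D : ℕ}
    (hQ : Q = Fintype.card K ^ j) (hF : Fintype.card F = Q ^ 2)
    (hu : Q - 1 = (Fintype.card K - 1) * u) (hQd : Q = d * (e * u) + 1)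
    (hχe : ∀ a ≠ 0, ∀ b ≠ 0, χ a = χ b → a ^ e = b ^ e) {g : F[X]} (hg : g.eval 0 ≠ 0)
    (hD : (X * g).natDegree ≤ D) (hlarge : (d + 1) * (D + 2) + 2 ≤ Q) (z : ℂ) :
    #{x : F | (X * g).eval x ≠ 0 ∧ χ (Algebra.norm K ((X * g).eval x)) = z} ≤
      e * u * Q + (2 * D + 3) * Q := by
  obtain ⟨p, hpK⟩ := CharP.exists K
  have : Fact p.Prime := ⟨CharP.char_is_prime K p⟩
  have : CharP F p := (Algebra.charP_iff K F p).mp hpK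
  obtain ⟨n, -, hKn⟩ := FiniteField.card K p
  have hQp : Q = p ^ (n * j : ℕ) := by rw [hQ, hKn, pow_mul]
  set S : Finset F := {x | (X * g).eval x ≠ 0 ∧ χ (Algebra.norm K ((X * g).eval x)) = z}
  obtain hempty | ⟨x₀, hx₀⟩ := S.eq_empty_or_nonempty
  · simp only [hempty, card_empty, Nat.zero_le]
  refine (card_le_card fun x hx => ?_).trans (card_pow_eval_eq_le hQp hF hQd hlarge hg hD
    ((X * g).eval x₀ ^ (e * u * (Q + 1))))
  obtain ⟨hx0, hxz⟩ := (mem_filter.mp hx).2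
  obtain ⟨hx₀0, hx₀z⟩ := (mem_filter.mp hx₀).2
  refine mem_filter.mpr ⟨mem_univ x, hx0, ?_⟩
  rw [← algebraMap_norm_pow_eq hF hu, ← algebraMap_norm_pow_eq hF hu]
  exact congrArg _ (hχe _ (Algebra.norm_ne_zero_iff.mpr hx0) _ (Algebra.norm_ne_zero_iff.mpr hx₀0)
    (hxz.trans hx₀z.symm))

lemma card_le_card_eval_ne_zero_add {K : Type*} [Field K] [Fintype K] [DecidableEq K] {f : K[X]}
    (hf : f ≠ 0) : Fintype.card K ≤ #{x : K | f.eval x ≠ 0} + f.natDegree := by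
  have hroots : #{x : K | ¬f.eval x ≠ 0} ≤ f.natDegree := by
    refine (card_le_card fun x hx => ?_).trans
      ((Multiset.toFinset_card_le f.roots).trans (card_roots' f))
    exact Multiset.mem_toFinset.mpr ((mem_roots hf).mpr (not_not.mp (mem_filter.mp hx).2))
  rw [← card_univ, ← card_filter_add_card_filter_not (fun x => f.eval x ≠ 0)]
  gcongr

lemma norm_sum_mulChar_norm_eval_le {χ : MulChar K ℂ} {Q d e j D : ℕ}
    (hQ : Q = Fintype.card K ^ j) (hF : Fintype.card F = Q ^ 2) (hd : 1 < d)
    (he : d * e = Fintype.card K - 1) (hχd : ∀ a ≠ 0, χ a ^ d = 1)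
    (hχe : ∀ a ≠ 0, ∀ b ≠ 0, χ a = χ b → a ^ e = b ^ e) {g : F[X]} (hg : g.eval 0 ≠ 0)
    (hD : (X * g).natDegree ≤ D) (hlarge : (d + 1) * (D + 2) + 2 ≤ Q) :
    ‖∑ x : F, χ (Algebra.norm K ((X * g).eval x))‖ ≤ (d * (2 * D + 3) + D) * Q := by
  classical
  obtain ⟨u, hu⟩ := Nat.sub_one_dvd_pow_sub_one (Fintype.card K) j
  rw [← hQ] at hu
  have hQd : Q = d * (e * u) + 1 := by rw [← mul_assoc, he, ← hu]; omega
  have hsum : ∑ x : F, χ (Algebra.norm K ((X * g).eval x)) =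
      ∑ x : F with (X * g).eval x ≠ 0, χ (Algebra.norm K ((X * g).eval x)) := by
    rw [sum_filter_of_ne]
    intro x _ hx h0
    exact hx (by rw [h0, Algebra.norm_zero, MulChar.map_zero])
  have hbound : ‖∑ x : F, χ (Algebra.norm K ((X * g).eval x))‖ ≤
      d * (e * u * Q + (2 * D + 3) * Q : ℕ) - #{x : F | (X * g).eval x ≠ 0} := by
    rw [hsum]
    refine norm_sum_le_of_card_fiber_le hd (fun x hx => ?_) fun z => ?_
    · exact hχd _ (Algebra.norm_ne_zero_iff.mpr (mem_filter.mp hx).2)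
    · rw [filter_filter]
      exact card_mulChar_norm_eval_eq_le hQ hF hu hQd hχe hg hD hlarge z
  have hgood : Q ^ 2 ≤ #{x : F | (X * g).eval x ≠ 0} + D := by
    rw [← hF]
    have hne : X * g ≠ 0 := mul_ne_zero X_ne_zero fun h => hg (by simp [h])
    exact (card_le_card_eval_ne_zero_add hne).trans (Nat.add_le_add_left hD _)
  have hQ1 : D ≤ D * Q := Nat.le_mul_of_pos_right D (by omega)
  have hQQ : Q ^ 2 = d * (e * u * Q) + Q := by rw [sq]; nth_rw 1 [hQd]; ring
  rify at hgood hQ1 hQQ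
  push_cast at hbound
  linarith [(Nat.cast_nonneg Q : (0 : ℝ) ≤ Q)]

end

theorem exists_norm_sum_mulChar_norm_aeval_le {K : Type*} [Field K] [Fintype K] {χ : MulChar K ℂ}
    (hχ : χ ≠ 1) {G : K[X]} (hG : G.eval 0 ≠ 0) :
    ∃ C : ℝ, ∃ j₀ : ℕ, ∀ j ≥ j₀, ∀ (F : Type) [Field F] [Fintype F] [Algebra K F],
      Fintype.card F = (Fintype.card K ^ j) ^ 2 →
      ‖∑ x : F, χ (Algebra.norm K (aeval x (X * G)))‖ ≤ C * (Fintype.card K : ℝ) ^ j := by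
  obtain ⟨d, e, hd, he, hχd, hχe⟩ := exists_mul_eq_card_sub_one_of_mulChar hχ
  set D := (X * G).natDegree
  refine ⟨d * (2 * D + 3) + D, (d + 1) * (D + 2) + 2, fun j hj F _ _ _ hF => ?_⟩
  have hmap : (X * G).map (algebraMap K F) = X * G.map (algebraMap K F) := by simp
  simp only [← eval_map_algebraMap, hmap]
  have hbound := norm_sum_mulChar_norm_eval_le rfl hF hd he hχd hχe (g := G.map (algebraMap K F))
    ?_ (hmap ▸ natDegree_map_le) (hj.trans (Nat.lt_pow_self Fintype.one_lt_card).le)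
  · exact_mod_cast hbound
  rwa [← map_zero (algebraMap K F), eval_map_apply, map_zero, _root_.map_ne_zero]

end SumOverExtension

section MinimalPolynomials

open Polynomial

lemma algebra_norm_algebraMap_sub {K F : Type*} [Field K] [Field F] [Algebra K F]
    [FiniteDimensional K F] (a : K) (x : F) :
    Algebra.norm K (algebraMap K F a - x) =
      (minpoly K x).eval a ^ (Module.finrank K F / (minpoly K x).natDegree) := by
  set y := x - algebraMap K F a with hy
  have hint : IsIntegral K y := IsIntegral.of_finite K y
  have hminpoly : minpoly K y = (minpoly K x).comp (X + C a) := minpoly.sub_algebraMap x a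
  have hdeg : (minpoly K y).natDegree = (minpoly K x).natDegree := by
    rw [hminpoly, natDegree_comp, natDegree_X_add_C, mul_one]
  have hcoeff : (minpoly K y).coeff 0 = (minpoly K x).eval a := by
    simp [coeff_zero_eq_eval_zero, hminpoly, eval_comp]
  have hfinrank : (minpoly K x).natDegree * Module.finrank (IntermediateField.adjoin K {y}) F =
      Module.finrank K F := by
    rw [← hdeg, ← IntermediateField.adjoin.finrank hint]
    exact Module.finrank_mul_finrank _ _ _
  have hquot : Module.finrank K F / (minpoly K x).natDegree =
      Module.finrank (IntermediateField.adjoin K {y}) F := by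
    rw [← hfinrank, Nat.mul_div_cancel_left _ (minpoly.natDegree_pos (IsIntegral.of_finite K x))]
  have hgen := Algebra.PowerBasis.norm_gen_eq_coeff_zero_minpoly
    (IntermediateField.adjoin.powerBasis hint)
  rw [IntermediateField.adjoin.powerBasis_gen, IntermediateField.minpoly_gen,
    IntermediateField.adjoin.powerBasis_dim, hcoeff, hdeg] at hgen
  have hneg : algebraMap K F a - x = algebraMap K F (-1) * y := by simp [hy]
  rw [hneg, map_mul, Algebra.norm_algebraMap, Algebra.norm_eq_norm_adjoin K y, hgen, hquot, mul_pow,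
    ← pow_mul, hfinrank, ← mul_assoc, ← mul_pow, neg_one_mul, neg_neg, one_pow, one_mul]

lemma card_minpoly_eq {K F : Type*} [Field K] [Finite K] [Field F] [Fintype F] [Algebra K F]
    [DecidableEq K[X]] {P : K[X]} (hP : Irreducible P) (hmonic : P.Monic)
    (hdvd : P.natDegree ∣ Module.finrank K F) :
    #{x : F | minpoly K x = P} = P.natDegree := by
  classical
  have : FiniteDimensional K F := Module.Finite.of_finite
  have hdvdX : P ∣ X ^ Nat.card F - X := by
    have h := hP.natDegree_dvd_iff_dvd_X_pow_card_pow_sub_X.mp hdvd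
    rwa [← Module.natCard_eq_pow_finrank (K := K) (V := F)] at h
  have hsplits : (P.map (algebraMap K F)).Splits := by
    refine splits_X_pow_nat_card_sub_X.of_dvd ?_ (by simpa using map_dvd (algebraMap K F) hdvdX)
    exact FiniteField.X_pow_card_sub_X_ne_zero F Finite.one_lt_card
  have hnodup : (P.aroots F).Nodup :=
    (nodup_aroots_iff_of_splits hmonic.ne_zero hsplits).mpr
      (PerfectField.separable_of_irreducible hP)
  have hroots : ({x : F | minpoly K x = P} : Finset F) = (P.aroots F).toFinset := by
    ext x
    simp only [mem_filter_univ, Multiset.mem_toFinset, mem_aroots]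
    constructor
    · rintro rfl
      exact ⟨hmonic.ne_zero, minpoly.aeval K x⟩
    · rintro ⟨-, hx⟩
      exact (minpoly.eq_of_irreducible_of_monic hP hx hmonic).symm
  rw [hroots, Multiset.toFinset_card_of_nodup hnodup, aroots, ← hsplits.natDegree_eq_card_roots,
    natDegree_map]

end MinimalPolynomials

section LFunction

open Polynomial

variable {K : Type*} [Field K]

open Classical in
lemma card_pow_dvd_eq_count_normalizedFactors {n : ℕ} {g P : K[X]} (hg : g ≠ 0)
    (hn : g.natDegree ≤ n) (hP : P.Monic) (hirr : Irreducible P) :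
    #{k ∈ Icc 1 n | P ^ k ∣ g} =
      (UniqueFactorizationMonoid.normalizedFactors g).count P := by
  set c := (UniqueFactorizationMonoid.normalizedFactors g).count P
  have hdvd_iff : ∀ k, P ^ k ∣ g ↔ k ≤ c := fun k => by
    rw [pow_dvd_iff_le_emultiplicity,
      UniqueFactorizationMonoid.emultiplicity_eq_count_normalizedFactors hirr hg,
      hP.normalize_eq_self, Nat.cast_le]
  have hc : c ≤ n := calc
    c ≤ c * P.natDegree := Nat.le_mul_of_pos_right c hirr.natDegree_pos
    _ = (P ^ c).natDegree := (natDegree_pow P c).symm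
    _ ≤ n := (natDegree_le_of_dvd ((hdvd_iff c).mpr le_rfl) hg).trans hn
  have hIcc : {k ∈ Icc 1 n | P ^ k ∣ g} = Icc 1 c := by
    ext k
    simp only [mem_filter, mem_Icc, hdvd_iff]
    lia
  rw [hIcc, Nat.card_Icc, Nat.add_sub_cancel]

open Classical in
lemma monic_of_mem_normalizedFactors {g P : K[X]}
    (hP : P ∈ UniqueFactorizationMonoid.normalizedFactors g) : P.Monic := by
  rw [← UniqueFactorizationMonoid.normalize_normalized_factor P hP]
  exact monic_normalize (UniqueFactorizationMonoid.irreducible_of_normalized_factor P hP).ne_zero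

variable [Finite K]

lemma finite_setOf_monic_natDegree_eq (K : Type*) [Field K] [Finite K] (n : ℕ) :
    {g : K[X] | g.Monic ∧ g.natDegree = n}.Finite :=
  Set.finite_coe_iff.mp <| Finite.of_equiv _
    ((monicEquivDegreeLT n).trans (degreeLTEquiv K n).toEquiv).symm

/-- The monic polynomials of degree `n` over a finite field: the terms of degree `n` in an
`L`-function. -/
noncomputable def monicOfDegree (K : Type*) [Field K] [Finite K] (n : ℕ) : Finset K[X] :=
  (finite_setOf_monic_natDegree_eq K n).toFinset

lemma mem_monicOfDegree {n : ℕ} {g : K[X]} :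
    g ∈ monicOfDegree K n ↔ g.Monic ∧ g.natDegree = n := by
  simp [monicOfDegree]

open Classical in
/-- The monic irreducible polynomials of degree at most `n` over a finite field: the primes that
matter for the first `n` terms of an `L`-function. -/
noncomputable def monicIrreducibles (K : Type*) [Field K] [Finite K] (n : ℕ) : Finset K[X] :=
  ((range (n + 1)).biUnion (monicOfDegree K)).filter Irreducible

lemma mem_monicIrreducibles {n : ℕ} {g : K[X]} :
    g ∈ monicIrreducibles K n ↔ g.Monic ∧ g.natDegree ≤ n ∧ Irreducible g := by
  simp [monicIrreducibles, mem_monicOfDegree]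
  tauto

open Classical in
lemma sum_natDegree_mul_card_pow_dvd {n : ℕ} {g : K[X]} (hg : g ∈ monicOfDegree K n) :
    ∑ P ∈ monicIrreducibles K n, P.natDegree * #{k ∈ Icc 1 n | P ^ k ∣ g} = n := by
  obtain ⟨hmonic, rfl⟩ := mem_monicOfDegree.mp hg
  set s := UniqueFactorizationMonoid.normalizedFactors g with hs
  have hsub : s.toFinset ⊆ monicIrreducibles K g.natDegree := fun P hP => by
    rw [Multiset.mem_toFinset] at hP
    exact mem_monicIrreducibles.mpr ⟨monic_of_mem_normalizedFactors hP,
      natDegree_le_of_dvd (UniqueFactorizationMonoid.dvd_of_mem_normalizedFactors hP)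
        hmonic.ne_zero, UniqueFactorizationMonoid.irreducible_of_normalized_factor P hP⟩
  have hprod : s.prod = g := by
    rw [hs, UniqueFactorizationMonoid.prod_normalizedFactors_eq hmonic.ne_zero,
      hmonic.normalize_eq_self]
  calc ∑ P ∈ monicIrreducibles K g.natDegree,
        P.natDegree * #{k ∈ Icc 1 g.natDegree | P ^ k ∣ g}
      = ∑ P ∈ monicIrreducibles K g.natDegree, s.count P • P.natDegree := by
        refine sum_congr rfl fun P hP => ?_
        obtain ⟨hPm, -, hPi⟩ := mem_monicIrreducibles.mp hP
        rw [card_pow_dvd_eq_count_normalizedFactors hmonic.ne_zero le_rfl hPm hPi, smul_eq_mul,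
          mul_comm]
    _ = ∑ P ∈ s.toFinset, s.count P • P.natDegree := by
        refine (sum_subset hsub fun P _ hP => ?_).symm
        rw [Multiset.mem_toFinset] at hP
        rw [Multiset.count_eq_zero_of_notMem hP, zero_smul]
    _ = (s.map natDegree).sum := (sum_multiset_map_count s natDegree).symm
    _ = s.prod.natDegree :=
        (natDegree_multiset_prod_of_monic s fun P hP => monic_of_mem_normalizedFactors hP).symm
    _ = g.natDegree := by rw [hprod]

variable {R : Type*} [CommSemiring R]

/-- The `n`-th coefficient `∑ lam g`, over monic `g` of degree `n`, of the `L`-function of a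
completely multiplicative function `lam` on `K[X]`. -/
noncomputable def lCoeff (lam : K[X] →* R) (n : ℕ) : R :=
  ∑ g ∈ monicOfDegree K n, lam g

/-- The `m`-th coefficient `∑ deg P * lam P ^ k`, over prime powers `P ^ k` of degree `m`, of the
logarithmic derivative of the `L`-function of `lam`. -/
noncomputable def primePowerSum (lam : K[X] →* R) (m : ℕ) : R :=
  ∑ P ∈ monicIrreducibles K m,
    if P.natDegree ∣ m then (P.natDegree : R) * lam P ^ (m / P.natDegree) else 0

lemma lCoeff_zero (lam : K[X] →* R) : lCoeff lam 0 = 1 := by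
  have hone : monicOfDegree K 0 = {1} := by
    ext g
    rw [mem_monicOfDegree, mem_singleton]
    refine ⟨fun h => h.1.natDegree_eq_zero.mp h.2, ?_⟩
    rintro rfl
    exact ⟨monic_one, natDegree_one⟩
  rw [lCoeff, hone, sum_singleton, map_one]

open Classical in
lemma sum_monicOfDegree_dvd {P : K[X]} (hP : P.Monic) (lam : K[X] →* R) (n : ℕ) :
    ∑ g ∈ monicOfDegree K n with P ∣ g, lam g =
      if P.natDegree ≤ n then lam P * lCoeff lam (n - P.natDegree) else 0 := by
  split_ifs with hn
  · rw [lCoeff, mul_sum]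
    symm
    refine sum_bij (fun h _ => P * h) (fun h hh => ?_) (fun a _ b _ => mul_left_cancel₀ hP.ne_zero)
      (fun g hg => ?_) (fun h _ => (map_mul lam P h).symm)
    · obtain ⟨hmonic, hdeg⟩ := mem_monicOfDegree.mp hh
      rw [mem_filter, mem_monicOfDegree, hP.natDegree_mul hmonic, hdeg, Nat.add_sub_cancel' hn]
      exact ⟨⟨hP.mul hmonic, rfl⟩, dvd_mul_right P h⟩
    · rw [mem_filter, mem_monicOfDegree] at hg
      obtain ⟨⟨hmonic, hdeg⟩, h, rfl⟩ := hg
      have hh : h.Monic := hP.of_mul_monic_left hmonic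
      rw [hP.natDegree_mul hh] at hdeg
      exact ⟨h, mem_monicOfDegree.mpr ⟨hh, by lia⟩, rfl⟩
  · refine (congrArg (fun s => ∑ g ∈ s, lam g) (filter_eq_empty_iff.mpr fun g hg hdvd => ?_)).trans
      sum_empty
    obtain ⟨hmonic, hdeg⟩ := mem_monicOfDegree.mp hg
    exact hn (hdeg ▸ natDegree_le_of_dvd hdvd hmonic.ne_zero)

lemma sum_Icc_ite_mul_le {d : ℕ} (hd : 0 < d) (n : ℕ) (f : ℕ → ℕ → R) :
    (∑ k ∈ Icc 1 n, if k * d ≤ n then f k (k * d) else 0) =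
      ∑ m ∈ Icc 1 n, if d ∣ m then f (m / d) m else 0 := by
  rw [← sum_filter, ← sum_filter]
  refine sum_bij' (fun k _ => k * d) (fun m _ => m / d) ?_ ?_ ?_ ?_ ?_
  · intro k hk
    simp only [mem_filter, mem_Icc] at hk ⊢
    exact ⟨⟨Nat.mul_pos hk.1.1 hd, hk.2⟩, dvd_mul_left d k⟩
  · intro m hm
    simp only [mem_filter, mem_Icc] at hm ⊢
    exact ⟨⟨Nat.div_pos (Nat.le_of_dvd hm.1.1 hm.2) hd, (Nat.div_le_self m d).trans hm.1.2⟩,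
      (Nat.div_mul_le_self m d).trans hm.1.2⟩
  · exact fun k _ => Nat.mul_div_cancel k hd
  · exact fun m hm => Nat.div_mul_cancel (mem_filter.mp hm).2
  · intro k _
    rw [Nat.mul_div_cancel k hd]

lemma primePowerSum_eq_sum_of_le (lam : K[X] →* R) {m n : ℕ} (hm : 0 < m) (hmn : m ≤ n) :
    primePowerSum lam m = ∑ P ∈ monicIrreducibles K n,
      if P.natDegree ∣ m then (P.natDegree : R) * lam P ^ (m / P.natDegree) else 0 := by
  refine sum_subset (fun P hP => ?_) fun P hP hP' => if_neg fun hdvd => hP' ?_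
  · obtain ⟨hmonic, hdeg, hirr⟩ := mem_monicIrreducibles.mp hP
    exact mem_monicIrreducibles.mpr ⟨hmonic, hdeg.trans hmn, hirr⟩
  · obtain ⟨hmonic, -, hirr⟩ := mem_monicIrreducibles.mp hP
    exact mem_monicIrreducibles.mpr ⟨hmonic, Nat.le_of_dvd hm hdvd, hirr⟩

-- The coefficientwise form of `X * L' = (X * L' / L) * L`, from `deg g = ∑ deg P` over `P ^ k ∣ g`.
lemma natCast_mul_lCoeff (lam : K[X] →* R) (n : ℕ) :
    (n : R) * lCoeff lam n = ∑ m ∈ Icc 1 n, primePowerSum lam m * lCoeff lam (n - m) := by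
  classical
  calc (n : R) * lCoeff lam n
      = ∑ g ∈ monicOfDegree K n, ∑ P ∈ monicIrreducibles K n, ∑ k ∈ Icc 1 n,
          (P.natDegree : R) * if P ^ k ∣ g then lam g else 0 := by
        rw [lCoeff, mul_sum]
        refine sum_congr rfl fun g hg => ?_
        conv_lhs => rw [← sum_natDegree_mul_card_pow_dvd hg]
        simp only [← mul_sum, ← sum_filter, sum_const, nsmul_eq_mul, Nat.cast_sum, Nat.cast_mul,
          sum_mul, mul_assoc]
    _ = ∑ P ∈ monicIrreducibles K n, ∑ k ∈ Icc 1 n,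
          (P.natDegree : R) * ∑ g ∈ monicOfDegree K n with P ^ k ∣ g, lam g := by
        rw [sum_comm]
        refine sum_congr rfl fun P _ => ?_
        rw [sum_comm]
        simp only [mul_sum, sum_filter]
    _ = ∑ P ∈ monicIrreducibles K n, ∑ m ∈ Icc 1 n, (if P.natDegree ∣ m then
          (P.natDegree : R) * lam P ^ (m / P.natDegree) else 0) * lCoeff lam (n - m) := by
        refine sum_congr rfl fun P hP => ?_
        obtain ⟨hmonic, -, hirr⟩ := mem_monicIrreducibles.mp hP
        simp only [sum_monicOfDegree_dvd (hmonic.pow _), natDegree_pow, map_pow, ite_mul, zero_mul,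
          mul_ite, mul_zero, ← mul_assoc]
        exact sum_Icc_ite_mul_le hirr.natDegree_pos n
          fun k m => (P.natDegree : R) * lam P ^ k * lCoeff lam (n - m)
    _ = ∑ m ∈ Icc 1 n, primePowerSum lam m * lCoeff lam (n - m) := by
        rw [sum_comm]
        refine sum_congr rfl fun m hm => ?_
        rw [mem_Icc] at hm
        rw [← sum_mul, ← primePowerSum_eq_sum_of_le lam hm.1 hm.2]

lemma primePowerSum_finrank {F : Type*} [Field F] [Fintype F] [Algebra K F] (lam : K[X] →* R) :
    primePowerSum lam (Module.finrank K F) =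
      ∑ x : F, lam (minpoly K x) ^ (Module.finrank K F / (minpoly K x).natDegree) := by
  classical
  have : FiniteDimensional K F := Module.Finite.of_finite
  have hint : ∀ x : F, IsIntegral K x := fun x => IsIntegral.of_finite K x
  have hmem : ∀ x ∈ (univ : Finset F), minpoly K x ∈ monicIrreducibles K (Module.finrank K F) :=
    fun x _ => mem_monicIrreducibles.mpr
      ⟨minpoly.monic (hint x), minpoly.natDegree_le x, minpoly.irreducible (hint x)⟩
  rw [← sum_fiberwise_of_maps_to hmem, primePowerSum]
  refine sum_congr rfl fun P hP => ?_
  obtain ⟨hmonic, -, hirr⟩ := mem_monicIrreducibles.mp hP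
  rw [sum_congr rfl (g := fun _ => lam P ^ (Module.finrank K F / P.natDegree))
    fun x hx => by rw [(mem_filter.mp hx).2], sum_const, nsmul_eq_mul]
  split_ifs with hdvd
  · rw [card_minpoly_eq hirr hmonic hdvd]
  · have hempty : ({x | minpoly K x = P} : Finset F) = ∅ :=
      filter_eq_empty_iff.mpr fun x _ hx => hdvd (hx ▸ minpoly.degree_dvd (hint x))
    rw [hempty, card_empty, Nat.cast_zero, zero_mul]

end LFunction

section PowerSums

open Polynomial

-- Pairing with a Lagrange basis polynomial isolates the powers of a single `z i`.
lemma norm_le_one_of_norm_sum_pow_le {ι : Type*} [Fintype ι] {z : ι → ℂ} {C : ℝ} {s₀ : ℕ}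
    (h : ∀ s ≥ s₀, ‖∑ i, z i ^ s‖ ≤ C) (i : ι) : ‖z i‖ ≤ 1 := by
  classical
  by_contra! hlt
  set l := Lagrange.basis (univ.image z) id (z i)
  have hself : l.eval (z i) = 1 :=
    Lagrange.eval_basis_self Function.injective_id.injOn (mem_image_of_mem z (mem_univ i))
  have hne : ∀ j, z j ≠ z i → l.eval (z j) = 0 := fun j hj =>
    Lagrange.eval_basis_of_ne (v := id) hj.symm (mem_image_of_mem z (mem_univ j))
  have hisolate : ∀ s, ∑ j, l.eval (z j) * z j ^ s = #{j | z j = z i} * z i ^ s := fun s => by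
    rw [← nsmul_eq_mul, ← sum_const, sum_filter]
    refine sum_congr rfl fun j _ => ?_
    split_ifs with hj
    · rw [hj, hself, one_mul]
    · rw [hne j hj, zero_mul]
  have hexpand : ∀ s, ∑ j, l.eval (z j) * z j ^ s =
      ∑ k ∈ range (l.natDegree + 1), l.coeff k * ∑ j, z j ^ (s + k) := fun s => by
    simp only [eval_eq_sum_range, sum_mul, mul_sum]
    rw [sum_comm]
    exact sum_congr rfl fun k _ => sum_congr rfl fun j _ => by ring
  have hbound : ∀ s ≥ s₀, ‖z i‖ ^ s ≤ ∑ k ∈ range (l.natDegree + 1), ‖l.coeff k‖ * C := by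
    intro s hs
    have hcard : (1 : ℝ) ≤ #{j | z j = z i} := by
      rw [Nat.one_le_cast, Nat.one_le_iff_ne_zero, card_ne_zero]
      exact ⟨i, mem_filter.mpr ⟨mem_univ i, rfl⟩⟩
    calc ‖z i‖ ^ s ≤ #{j | z j = z i} * ‖z i‖ ^ s := le_mul_of_one_le_left (by positivity) hcard
      _ = ‖∑ j, l.eval (z j) * z j ^ s‖ := by
        rw [hisolate, norm_mul, norm_pow, Complex.norm_natCast]
      _ ≤ ∑ k ∈ range (l.natDegree + 1), ‖l.coeff k‖ * C := by
        rw [hexpand]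
        refine norm_sum_le_of_le _ fun k _ => ?_
        rw [norm_mul]
        gcongr
        exact h _ (by lia)
  obtain ⟨s, hs, hs₀⟩ := (((tendsto_pow_atTop_atTop_of_one_lt hlt).eventually_gt_atTop _).and
    (Filter.eventually_ge_atTop s₀)).exists
  exact (hbound s hs₀).not_gt hs

lemma natCast_mul_neg_one_pow_mul_esymm {ι R : Type*} [Fintype ι] [CommRing R] (ω : ι → R)
    (n : ℕ) :
    (n : R) * ((-1) ^ n * MvPolynomial.aeval ω (MvPolynomial.esymm ι R n)) =
      ∑ m ∈ Icc 1 n, (-∑ i, ω i ^ m) *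
        ((-1) ^ (n - m) * MvPolynomial.aeval ω (MvPolynomial.esymm ι R (n - m))) := by
  classical
  set e := fun n => MvPolynomial.aeval ω (MvPolynomial.esymm ι R n)
  have hnewton : (n : R) * e n = (-1) ^ (n + 1) *
      ∑ a ∈ antidiagonal n with a.1 < n, (-1) ^ a.1 * e a.1 * ∑ i, ω i ^ a.2 := by
    simpa [MvPolynomial.psum, e] using
      congrArg (MvPolynomial.aeval ω) (MvPolynomial.mul_esymm_eq_sum ι R n)
  have hsign : ((-1 : R) ^ n * (-1) ^ (n + 1)) = -1 := by
    rw [← pow_add, ← add_assoc, ← two_mul, pow_succ, pow_mul, neg_one_sq, one_pow, one_mul]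
  rw [mul_left_comm, hnewton, ← mul_assoc, hsign, neg_one_mul, ← sum_neg_distrib]
  refine sum_bij' (fun a _ => a.2) (fun m _ => (n - m, m)) ?_ ?_ ?_ ?_ ?_
  · rintro ⟨a, m⟩ h
    simp only [mem_filter, HasAntidiagonal.mem_antidiagonal, mem_Icc] at h ⊢
    lia
  · intro m h
    simp only [mem_filter, HasAntidiagonal.mem_antidiagonal, mem_Icc] at h ⊢
    lia
  · rintro ⟨a, m⟩ h
    simp only [mem_filter, HasAntidiagonal.mem_antidiagonal] at h
    rw [← h.1, Nat.add_sub_cancel]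
  · exact fun m _ => rfl
  · rintro ⟨a, m⟩ h
    simp only [mem_filter, HasAntidiagonal.mem_antidiagonal] at h
    rw [← h.1, Nat.add_sub_cancel]
    ring

lemma eq_of_sum_Icc_mul_eq {R : Type*} [Ring R] {a s t : ℕ → R} (ha : a 0 = 1)
    (h : ∀ n, ∑ m ∈ Icc 1 n, s m * a (n - m) = ∑ m ∈ Icc 1 n, t m * a (n - m)) {m : ℕ}
    (hm : 0 < m) : s m = t m := by
  induction m using Nat.strong_induction_on with
  | _ m ih =>
    obtain ⟨n, rfl⟩ := Nat.exists_eq_succ_of_ne_zero hm.ne'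
    have hlower : ∑ k ∈ Icc 1 n, s k * a (n + 1 - k) = ∑ k ∈ Icc 1 n, t k * a (n + 1 - k) :=
      sum_congr rfl fun k hk => by
        rw [mem_Icc] at hk
        rw [ih k (by lia) hk.1]
    have htop := h (n + 1)
    rwa [sum_Icc_succ_top (by lia), sum_Icc_succ_top (by lia), hlower, add_right_inj, Nat.sub_self,
      ha, mul_one, mul_one] at htop

lemma exists_fin_map_univ_eq {α : Type*} {D : ℕ} {s : Multiset α} (hs : s.card = D) :
    ∃ ω : Fin D → α, univ.val.map ω = s := by
  obtain ⟨l, rfl⟩ : ∃ l : List α, (l : Multiset α) = s := ⟨s.toList, s.coe_toList⟩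
  rw [Multiset.coe_card] at hs
  subst hs
  exact ⟨l.get, by rw [Fin.univ_val_map, List.ofFn_get]⟩

lemma exists_eq_neg_one_pow_mul_esymm {k : Type*} [Field k] [IsAlgClosed k] {a : ℕ → k} {D : ℕ}
    (ha : a 0 = 1) (hD : ∀ n > D, a n = 0) :
    ∃ ω : Fin D → k, ∀ n,
      a n = (-1) ^ n * MvPolynomial.aeval ω (MvPolynomial.esymm (Fin D) k n) := by
  set f : k[X] := ∑ n ∈ range (D + 1), C (a n) * X ^ (D - n) with hf
  have hcoeff : ∀ n ≤ D, f.coeff (D - n) = a n := by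
    intro n hn
    rw [hf, finsetSum_coeff, sum_eq_single n _ fun h => absurd (mem_range.mpr (by lia)) h]
    · rw [coeff_C_mul_X_pow, if_pos rfl]
    · intro b hb hbn
      rw [mem_range] at hb
      rw [coeff_C_mul_X_pow, if_neg (by lia)]
  have htop : f.coeff D = 1 := by simpa only [Nat.sub_zero, ha] using hcoeff 0 D.zero_le
  have hdeg_le : f.natDegree ≤ D := natDegree_sum_le_of_forall_le _ _ fun n _ =>
    (natDegree_C_mul_X_pow_le _ _).trans (Nat.sub_le D n)
  have hmonic : f.Monic := monic_of_natDegree_le_of_coeff_eq_one D hdeg_le htop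
  have hdeg : f.natDegree = D :=
    hdeg_le.antisymm (le_natDegree_of_ne_zero (htop ▸ one_ne_zero))
  have hcard : f.roots.card = D :=
    (IsAlgClosed.splits f).natDegree_eq_card_roots.symm.trans hdeg
  obtain ⟨ω, hω⟩ := exists_fin_map_univ_eq hcard
  refine ⟨ω, fun n => ?_⟩
  rw [MvPolynomial.aeval_esymm_eq_multiset_esymm, hω]
  rcases le_or_gt n D with hn | hn
  · rw [← hcoeff n hn, coeff_eq_esymm_roots_of_splits (IsAlgClosed.splits f) (by lia),
      hmonic.leadingCoeff, hdeg, one_mul, Nat.sub_sub_self hn]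
  · rw [hD n hn, Multiset.esymm, Multiset.powersetCard_eq_empty _ (by lia)]
    simp

lemma exists_forall_eq_neg_sum_pow {k : Type*} [Field k] [IsAlgClosed k] {a s : ℕ → k} {D : ℕ}
    (ha : a 0 = 1) (hD : ∀ n > D, a n = 0)
    (hnewton : ∀ n : ℕ, (n : k) * a n = ∑ m ∈ Icc 1 n, s m * a (n - m)) :
    ∃ ω : Fin D → k, ∀ m, 0 < m → s m = -∑ i, ω i ^ m := by
  obtain ⟨ω, hω⟩ := exists_eq_neg_one_pow_mul_esymm ha hD
  refine ⟨ω, fun m hm => eq_of_sum_Icc_mul_eq (t := fun m => -∑ i, ω i ^ m) ha (fun n => ?_) hm⟩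
  rw [← hnewton]
  simp only [hω]
  exact natCast_mul_neg_one_pow_mul_esymm ω n

lemma norm_one_le_of_norm_two_mul_le {a s : ℕ → ℂ} {D j₀ : ℕ} {C q : ℝ} (hq : 0 < q)
    (ha : a 0 = 1) (hD : ∀ n > D, a n = 0)
    (hnewton : ∀ n : ℕ, (n : ℂ) * a n = ∑ m ∈ Icc 1 n, s m * a (n - m))
    (hs : ∀ j ≥ j₀, ‖s (2 * j)‖ ≤ C * q ^ j) : ‖s 1‖ ≤ D * √q := by
  obtain ⟨ω, hω⟩ := exists_forall_eq_neg_sum_pow ha hD hnewton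
  have hnorm : ∀ i, ‖ω i ^ 2 / q‖ ≤ 1 := by
    refine norm_le_one_of_norm_sum_pow_le (C := C) (s₀ := j₀ + 1) fun j hj => ?_
    have hsum : ∑ i, (ω i ^ 2 / (q : ℂ)) ^ j = (∑ i, ω i ^ (2 * j)) / (q : ℂ) ^ j := by
      simp only [div_pow, pow_mul, sum_div]
    rw [hsum, norm_div, norm_pow, Complex.norm_real, Real.norm_of_nonneg hq.le,
      div_le_iff₀ (by positivity), ← norm_neg, ← hω (2 * j) (by lia)]
    exact hs j (by lia)
  have hsqrt : ∀ i, ‖ω i‖ ≤ √q := fun i => by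
    have h := hnorm i
    rw [norm_div, norm_pow, Complex.norm_real, Real.norm_of_nonneg hq.le, div_le_one hq] at h
    exact Real.le_sqrt_of_sq_le h
  calc ‖s 1‖ = ‖∑ i, ω i‖ := by simp only [hω 1 one_pos, norm_neg, pow_one]
    _ ≤ ∑ _ : Fin D, √q := norm_sum_le_of_le _ fun i _ => hsqrt i
    _ = D * √q := by simp

end PowerSums

section WeilBound

open Polynomial

variable {K : Type*} [Field K] {χ : MulChar K ℂ} {S : Finset K} {e : K → ℕ} {a₀ : K}

/-- The completely multiplicative function `g ↦ ∏ χ(g(a)) ^ e(a)`, over `a ∈ S`, on `K[X]`. Its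
value at `a - X` up to sign is the summand of the character sum that the `L`-function controls. -/
noncomputable def evalChar {K : Type*} [Field K] (χ : MulChar K ℂ) (S : Finset K) (e : K → ℕ) :
    K[X] →* ℂ where
  toFun g := ∏ a ∈ S, χ (g.eval a) ^ e a
  map_one' := by simp only [eval_one, map_one, one_pow, prod_const_one]
  map_mul' g h := by simp only [eval_mul, map_mul, mul_pow, prod_mul_distrib]

lemma evalChar_apply (g : K[X]) : evalChar χ S e g = ∏ a ∈ S, χ (g.eval a) ^ e a := rfl

lemma sum_prod_mulChar_norm_eq [DecidableEq K] (ha₀ : a₀ ∈ S) (he : e a₀ = 1) (F : Type*) [Field F]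
    [Fintype F] [Algebra K F] :
    ∑ x : F, ∏ a ∈ S, χ (Algebra.norm K (algebraMap K F a - x)) ^ e a =
      ∑ x : F, χ (Algebra.norm K
        (aeval x (X * ∏ a ∈ S.erase a₀, (X + C (a - a₀)) ^ e a : K[X]))) := by
  refine Fintype.sum_equiv (Equiv.subLeft (algebraMap K F a₀)) _ _ fun x => ?_
  simp only [Equiv.subLeft_apply, map_mul, map_prod, map_pow, map_add, aeval_X, aeval_C, map_sub]
  rw [← mul_prod_erase _ _ ha₀, he, pow_one]
  congr 1
  refine prod_congr rfl fun a _ => ?_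
  rw [sub_add_sub_cancel']

lemma sum_evalChar_add_C_mul [Fintype K] [DecidableEq K] (hχ : χ ≠ 1) (ha₀ : a₀ ∈ S)
    (he : e a₀ = 1) {l : K[X]} (hl₀ : l.eval a₀ ≠ 0) (hl : ∀ a ∈ S.erase a₀, l.eval a = 0)
    (g : K[X]) :
    ∑ c, evalChar χ S e (g + C c * l) = 0 := by
  have hfactor : ∀ c, evalChar χ S e (g + C c * l) =
      (∏ a ∈ S.erase a₀, χ (g.eval a) ^ e a) * χ (g.eval a₀ + c * l.eval a₀) := fun c => by
    rw [evalChar_apply, ← prod_erase_mul _ _ ha₀, he, pow_one, eval_add, eval_C_mul]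
    congr 1
    refine prod_congr rfl fun a ha => ?_
    rw [eval_add, eval_C_mul, hl a ha, mul_zero, add_zero]
  have hreindex : ∑ c, χ (g.eval a₀ + c * l.eval a₀) = ∑ v, χ v :=
    Fintype.sum_equiv ((Equiv.mulRight₀ _ hl₀).trans (Equiv.addLeft (g.eval a₀))) _ _ fun _ => rfl
  simp only [hfactor]
  rw [← mul_sum, hreindex, MulChar.sum_eq_zero_of_ne_one hχ, mul_zero]

section

variable [Finite K]

lemma add_mem_monicOfDegree {n : ℕ} {f g : K[X]} (hg : g ∈ monicOfDegree K n)
    (hf : f.natDegree < n) : g + f ∈ monicOfDegree K n := by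
  obtain ⟨hmonic, rfl⟩ := mem_monicOfDegree.mp hg
  exact mem_monicOfDegree.mpr
    ⟨hmonic.add_of_left (degree_lt_degree hf), natDegree_add_eq_left_of_natDegree_lt hf⟩

-- Average over the translations `g ↦ g + c * l`, where `l` vanishes on `S` except at `a₀`.
lemma lCoeff_evalChar_eq_zero (hχ : χ ≠ 1) (ha₀ : a₀ ∈ S) (he : e a₀ = 1) {n : ℕ} (hn : #S ≤ n) :
    lCoeff (evalChar χ S e) n = 0 := by
  classical
  cases nonempty_fintype K
  set l : K[X] := ∏ v ∈ S.erase a₀, (X - C v) with hl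
  have hdeg : l.natDegree < n := by
    rw [hl, natDegree_finsetProd_X_sub_C_eq_card, card_erase_of_mem ha₀]
    exact (Nat.sub_lt (card_pos.mpr ⟨a₀, ha₀⟩) one_pos).trans_le hn
  have hl₀ : l.eval a₀ ≠ 0 := by
    rw [hl, eval_prod, prod_ne_zero_iff]
    intro v hv
    rw [eval_sub, eval_X, eval_C]
    exact sub_ne_zero.mpr (ne_of_mem_erase hv).symm
  have hl_zero : ∀ a ∈ S.erase a₀, l.eval a = 0 := fun a ha => by
    rw [hl, eval_prod]
    exact prod_eq_zero ha (by rw [eval_sub, eval_X, eval_C, sub_self])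
  have hshift : ∀ c, ∀ g ∈ monicOfDegree K n, g + C c * l ∈ monicOfDegree K n := fun c g hg =>
    add_mem_monicOfDegree hg ((natDegree_C_mul_le c l).trans_lt hdeg)
  have hinv : ∀ c, ∑ g ∈ monicOfDegree K n, evalChar χ S e (g + C c * l) =
      lCoeff (evalChar χ S e) n := fun c =>
    sum_bij' (fun g _ => g + C c * l) (fun g _ => g + C (-c) * l) (hshift c) (hshift (-c))
      (fun g _ => by rw [C_neg]; ring) (fun g _ => by rw [C_neg]; ring) fun _ _ => rfl
  have hsum : ∑ _ : K, lCoeff (evalChar χ S e) n = 0 := by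
    rw [← sum_congr rfl fun c _ => hinv c, sum_comm]
    exact sum_eq_zero fun g _ => sum_evalChar_add_C_mul hχ ha₀ he hl₀ hl_zero g
  rw [sum_const, card_univ, nsmul_eq_mul] at hsum
  exact (mul_eq_zero.mp hsum).resolve_left (Nat.cast_ne_zero.mpr Fintype.card_ne_zero)

lemma primePowerSum_evalChar (χ : MulChar K ℂ) (S : Finset K) (e : K → ℕ) (F : Type*) [Field F]
    [Fintype F] [Algebra K F] :
    primePowerSum (evalChar χ S e) (Module.finrank K F) =
      ∑ x : F, ∏ a ∈ S, χ (Algebra.norm K (algebraMap K F a - x)) ^ e a := by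
  have : FiniteDimensional K F := Module.Finite.of_finite
  rw [primePowerSum_finrank]
  refine sum_congr rfl fun x _ => ?_
  rw [evalChar_apply, ← prod_pow]
  refine prod_congr rfl fun a _ => ?_
  rw [algebra_norm_algebraMap_sub, map_pow, ← pow_mul, ← pow_mul, mul_comm]

end

/-- **Weil's bound** for multiplicative character sums of products of linear polynomials. -/
theorem norm_sum_prod_mulChar_sub_pow_le [Fintype K] (hχ : χ ≠ 1) (ha₀ : a₀ ∈ S) (he : e a₀ = 1) :
    ‖∑ x, ∏ a ∈ S, χ (a - x) ^ e a‖ ≤ #S * √(Fintype.card K) := by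
  classical
  obtain ⟨p, hchar⟩ := CharP.exists K
  have : Fact p.Prime := ⟨CharP.char_is_prime K p⟩
  have hone : primePowerSum (evalChar χ S e) 1 = ∑ x, ∏ a ∈ S, χ (a - x) ^ e a := by
    simpa [Algebra.norm_self] using primePowerSum_evalChar χ S e K
  set G : K[X] := ∏ a ∈ S.erase a₀, (X + C (a - a₀)) ^ e a with hG
  have hG₀ : G.eval 0 ≠ 0 := by
    rw [hG, eval_prod, prod_ne_zero_iff]
    intro a ha
    rw [eval_pow, eval_add, eval_X, eval_C, zero_add]
    exact pow_ne_zero _ (sub_ne_zero.mpr (ne_of_mem_erase ha))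
  obtain ⟨C, j₀, hC⟩ := exists_norm_sum_mulChar_norm_aeval_le hχ hG₀
  rw [← hone]
  refine norm_one_le_of_norm_two_mul_le (j₀ := j₀ + 1) (C := C) (by positivity) (lCoeff_zero _)
    (fun n hn => lCoeff_evalChar_eq_zero hχ ha₀ he hn.le) (natCast_mul_lCoeff _) fun j hj => ?_
  have : NeZero (2 * j) := ⟨by lia⟩
  let F := FiniteField.Extension K p (2 * j)
  let : Fintype F := Fintype.ofFinite F
  have hcard : Fintype.card F = (Fintype.card K ^ j) ^ 2 := by
    rw [← Nat.card_eq_fintype_card, FiniteField.natCard_extension, Nat.card_eq_fintype_card,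
      ← pow_mul, mul_comm]
  have hsum := primePowerSum_evalChar χ S e F
  rw [FiniteField.finrank_extension, sum_prod_mulChar_norm_eq ha₀ he] at hsum
  rw [hsum]
  exact hC j (by lia) F hcard

end WeilBound

lemma norm_mulChar_apply_le_one {K : Type*} [Field K] [Finite K] (χ : MulChar K ℂ) (x : K) :
    ‖χ x‖ ≤ 1 := by
  have : Fintype K := .ofFinite K
  rcases eq_or_ne x 0 with rfl | hx
  · rw [MulChar.map_zero, norm_zero]
    exact zero_le_one
  · refine (Complex.norm_eq_one_of_pow_eq_one (n := Fintype.card K - 1) ?_ ?_).le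
    · rw [← map_pow, FiniteField.pow_card_sub_one_eq_one x hx, map_one]
    · exact (Nat.sub_pos_of_lt Fintype.one_lt_card).ne'

section Moment

variable {K : Type*} [Field K]

/-- The correlation sum of a multiplicative character over the finite set `T` of shifts. -/
noncomputable def corrSum (χ : MulChar K ℂ) (T : Finset K) (z₁ z₂ : K) : ℂ :=
  ∑ t ∈ T, χ (z₁ + t) * star (χ (z₂ + t))

/-- The product of values of a multiplicative character at shifts, half of them conjugated, that
appears in the `2r`-th moment of a correlation sum. -/
noncomputable def shiftProd (χ : MulChar K ℂ) {r : ℕ} (t : Fin r ⊕ Fin r → K) (z : K) : ℂ :=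
  (∏ i, χ (z + t (Sum.inl i))) * ∏ i, star (χ (z + t (Sum.inr i)))

lemma ofReal_norm_corrSum_pow (χ : MulChar K ℂ) (T : Finset K) (r : ℕ) (z₁ z₂ : K) :
    ((‖corrSum χ T z₁ z₂‖ ^ (2 * r) : ℝ) : ℂ) =
      ∑ t ∈ Fintype.piFinset fun _ : Fin r ⊕ Fin r => T,
        shiftProd χ t z₁ * star (shiftProd χ t z₂) := by
  calc ((‖corrSum χ T z₁ z₂‖ ^ (2 * r) : ℝ) : ℂ)
      = corrSum χ T z₁ z₂ ^ r * star (corrSum χ T z₁ z₂) ^ r := by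
        rw [← mul_pow, pow_mul, Complex.ofReal_pow, Complex.ofReal_pow]
        exact congrArg (· ^ r) (Complex.mul_conj' _).symm
    _ = ∏ i : Fin r ⊕ Fin r, ∑ t ∈ T, Sum.elim (fun _ => χ (z₁ + t) * star (χ (z₂ + t)))
          (fun _ => star (χ (z₁ + t)) * χ (z₂ + t)) i := by
        simp [Fintype.prod_sum_type, corrSum, mul_comm]
    _ = ∑ t ∈ Fintype.piFinset fun _ : Fin r ⊕ Fin r => T,
          shiftProd χ t z₁ * star (shiftProd χ t z₂) := by
        rw [prod_univ_sum]
        refine sum_congr rfl fun t _ => ?_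
        simp only [Fintype.prod_sum_type, Sum.elim_inl, Sum.elim_inr, shiftProd, star_mul',
          star_prod, star_star, prod_mul_distrib]
        ring

variable [Fintype K]

lemma sum_norm_corrSum_pow_eq (χ : MulChar K ℂ) (T : Finset K) (r : ℕ) :
    ∑ z₁, ∑ z₂, ‖corrSum χ T z₁ z₂‖ ^ (2 * r) =
      ∑ t ∈ Fintype.piFinset fun _ : Fin r ⊕ Fin r => T, ‖∑ z, shiftProd χ t z‖ ^ 2 := by
  apply Complex.ofReal_injective
  simp only [Complex.ofReal_sum, ofReal_norm_corrSum_pow]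
  rw [sum_congr rfl fun z₁ _ => sum_comm, sum_comm]
  refine sum_congr rfl fun t _ => ?_
  rw [← sum_mul_sum, ← star_sum, Complex.ofReal_pow]
  exact Complex.mul_conj' _

-- The exponent is `2 * (card K - 1) - 1` rather than `card K - 2` to be positive when `card K = 2`.
lemma star_mulChar_apply (χ : MulChar K ℂ) (x : K) :
    star (χ x) = χ x ^ (2 * Fintype.card K - 3) := by
  have hK := Fintype.one_lt_card (α := K)
  rw [MulChar.star_apply', MulChar.inv_apply', ← map_pow]
  rcases eq_or_ne x 0 with rfl | hx
  · rw [inv_zero, zero_pow (by lia)]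
  · congr 1
    refine inv_eq_of_mul_eq_one_right ?_
    rw [← pow_succ', show 2 * Fintype.card K - 3 + 1 = (Fintype.card K - 1) * 2 by lia, pow_mul,
      FiniteField.pow_card_sub_one_eq_one x hx, one_pow]

lemma norm_sum_prod_mulChar_add_pow_le {χ : MulChar K ℂ} (hχ : χ ≠ 1) {ι : Type*} [Fintype ι]
    {t : ι → K} {e : ι → ℕ} {i₀ : ι} (he : e i₀ = 1) (ht : ∀ i, t i = t i₀ → i = i₀) :
    ‖∑ z, ∏ i, χ (z + t i) ^ e i‖ ≤ Fintype.card ι * √(Fintype.card K) := by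
  classical
  have hfiber : ({i | t i = t i₀} : Finset ι) = {i₀} := by
    ext i
    rw [mem_filter_univ, mem_singleton]
    exact ⟨ht i, congrArg t⟩
  have hsum : ∑ z, ∏ i, χ (z + t i) ^ e i =
      ∑ x, ∏ a ∈ univ.image t, χ (a - x) ^ ∑ i with t i = a, e i := by
    refine Fintype.sum_equiv (Equiv.neg K) _ _ fun z => ?_
    rw [← prod_fiberwise_of_maps_to fun i _ => mem_image_of_mem t (mem_univ i)]
    refine prod_congr rfl fun a _ => ?_
    rw [← prod_pow_eq_pow_sum]
    refine prod_congr rfl fun i hi => ?_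
    rw [(mem_filter.mp hi).2, Equiv.neg_apply, sub_neg_eq_add, add_comm]
  rw [hsum]
  refine (norm_sum_prod_mulChar_sub_pow_le hχ (mem_image_of_mem t (mem_univ i₀)) ?_).trans ?_
  · rw [hfiber, sum_singleton, he]
  · gcongr
    exact card_image_le

lemma norm_sum_shiftProd_le_card (χ : MulChar K ℂ) {r : ℕ} (t : Fin r ⊕ Fin r → K) :
    ‖∑ z, shiftProd χ t z‖ ≤ Fintype.card K := by
  refine (norm_sum_le_of_le _ fun z _ => ?_).trans (by simp : ∑ _ : K, (1 : ℝ) ≤ _)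
  rw [shiftProd, norm_mul, norm_prod, norm_prod]
  refine mul_le_one₀ (prod_le_one (fun _ _ => norm_nonneg _) fun _ _ => ?_) (by positivity)
    (prod_le_one (fun _ _ => norm_nonneg _) fun _ _ => ?_)
  · exact norm_mulChar_apply_le_one χ _
  · rw [norm_star]
    exact norm_mulChar_apply_le_one χ _

lemma norm_sum_shiftProd_le {χ : MulChar K ℂ} (hχ : χ ≠ 1) {r : ℕ} {t : Fin r ⊕ Fin r → K}
    {i₀ : Fin r ⊕ Fin r} (ht : ∀ i, t i = t i₀ → i = i₀) :
    ‖∑ z, shiftProd χ t z‖ ≤ 2 * r * √(Fintype.card K) := by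
  have hcard : (Fintype.card (Fin r ⊕ Fin r) : ℝ) = 2 * r := by
    rw [Fintype.card_sum, Fintype.card_fin, Nat.cast_add, two_mul]
  rw [← hcard]
  set d := 2 * Fintype.card K - 3
  rcases i₀ with i₀ | i₀
  · convert! norm_sum_prod_mulChar_add_pow_le hχ (e := Sum.elim (fun _ => 1) fun _ => d)
      (Sum.elim_inl ..) ht using 4 with z
    simp [shiftProd, Fintype.prod_sum_type, star_mulChar_apply, d]
  · rw [← norm_star, star_sum]
    convert! norm_sum_prod_mulChar_add_pow_le hχ (e := Sum.elim (fun _ => d) fun _ => 1)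
      (Sum.elim_inr ..) ht using 4 with z
    simp only [shiftProd, star_mul', star_prod, star_star]
    simp [Fintype.prod_sum_type, star_mulChar_apply, d]

-- A function taking no value exactly once has at most `r` values, so it factors through `Fin r`.
lemma card_piFinset_forall_exists_ne_le {α ι : Type*} [DecidableEq α] [Fintype ι] [DecidableEq ι]
    {r : ℕ} (hι : Fintype.card ι = 2 * r) (T : Finset α) :
    #{t ∈ Fintype.piFinset fun _ : ι => T | ∀ i₀, ∃ i, t i = t i₀ ∧ i ≠ i₀} ≤
      r ^ (2 * r) * #T ^ r := by
  have hsub : {t ∈ Fintype.piFinset fun _ : ι => T | ∀ i₀, ∃ i, t i = t i₀ ∧ i ≠ i₀} ⊆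
      ((univ : Finset (ι → Fin r)) ×ˢ Fintype.piFinset fun _ : Fin r => T).image
        fun q => q.2 ∘ q.1 := by
    intro t ht
    rw [mem_filter, Fintype.mem_piFinset] at ht
    obtain ⟨hT, hne⟩ := ht
    have hvalues : #(univ.image t) ≤ r := by
      have hle : #(univ.image t) * 2 ≤ #(univ : Finset ι) := by
        rw [card_eq_sum_card_image t, ← smul_eq_mul]
        refine card_nsmul_le_sum _ _ _ fun a ha => ?_
        obtain ⟨i₀, -, rfl⟩ := mem_image.mp ha
        obtain ⟨i, hi, hii₀⟩ := hne i₀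
        exact one_lt_card.mpr ⟨i, by simpa using hi, i₀, by simp, hii₀⟩
      rw [card_univ, hι] at hle
      lia
    obtain ⟨emb⟩ : Nonempty (univ.image t ↪ Fin r) :=
      Function.Embedding.nonempty_of_card_le (by simpa using hvalues)
    let σ : ι → Fin r := fun i => emb ⟨t i, mem_image_of_mem t (mem_univ i)⟩
    have hfactors : Function.FactorsThrough t σ := fun i i' h =>
      congrArg Subtype.val (emb.injective h)
    let default : Fin r → α := fun j =>
      t ((Fintype.equivFinOfCardEq hι).symm (j.castLE (Nat.le_mul_of_pos_left r two_pos)))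
    refine mem_image.mpr ⟨(σ, Function.extend σ t default),
      mem_product.mpr ⟨mem_univ σ, Fintype.mem_piFinset.mpr fun j => ?_⟩,
      hfactors.extend_comp default⟩
    simp only [Function.extend]
    split_ifs
    · exact hT _
    · exact hT _
  refine (card_le_card hsub).trans (card_image_le.trans_eq ?_)
  simp [card_product, Fintype.card_piFinset, hι]

theorem sum_norm_corrSum_pow_le {χ : MulChar K ℂ} (hχ : χ ≠ 1) (T : Finset K) (r : ℕ) :
    ∑ z₁, ∑ z₂, ‖corrSum χ T z₁ z₂‖ ^ (2 * r) ≤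
      (r : ℝ) ^ (2 * r) * #T ^ r * Fintype.card K ^ 2 +
        (2 * r) ^ 2 * Fintype.card K * #T ^ (2 * r) := by
  classical
  have hcard : Fintype.card (Fin r ⊕ Fin r) = 2 * r := by
    rw [Fintype.card_sum, Fintype.card_fin, two_mul]
  have hT : #(Fintype.piFinset fun _ : Fin r ⊕ Fin r => T) = #T ^ (2 * r) := by
    simp [Fintype.card_piFinset, hcard]
  rw [sum_norm_corrSum_pow_eq, ← sum_filter_add_sum_filter_not _
    fun t : Fin r ⊕ Fin r → K => ∀ i₀, ∃ i, t i = t i₀ ∧ i ≠ i₀]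
  refine add_le_add ?_ ?_
  · calc _ ≤ _ := sum_le_card_nsmul _ _ ((Fintype.card K : ℝ) ^ 2) fun t _ => by
          gcongr
          exact norm_sum_shiftProd_le_card χ t
      _ ≤ (r : ℝ) ^ (2 * r) * #T ^ r * Fintype.card K ^ 2 := by
          rw [nsmul_eq_mul]
          gcongr
          exact_mod_cast card_piFinset_forall_exists_ne_le hcard T
  · calc _ ≤ _ := sum_le_card_nsmul _ _ ((2 * r : ℝ) ^ 2 * Fintype.card K) fun t ht => by
          obtain ⟨i₀, hi₀⟩ : ∃ i₀, ∀ i, t i = t i₀ → i = i₀ := by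
            simpa only [not_forall, not_exists, not_and, not_not] using (mem_filter.mp ht).2
          calc ‖∑ z, shiftProd χ t z‖ ^ 2 ≤ (2 * r * √(Fintype.card K) : ℝ) ^ 2 := by
                gcongr
                exact norm_sum_shiftProd_le hχ hi₀
            _ = (2 * r : ℝ) ^ 2 * Fintype.card K := by
                rw [mul_pow, Real.sq_sqrt (by positivity)]
      _ ≤ (2 * r) ^ 2 * Fintype.card K * #T ^ (2 * r) := by
          rw [nsmul_eq_mul, mul_comm]
          gcongr
          exact_mod_cast (card_filter_le _ _).trans_eq hT

end Moment

section DivisorBound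

lemma exists_add_one_le_mul_rpow_pow {ε : ℝ} (hε : 0 < ε) :
    ∃ A : ℝ, 1 ≤ A ∧ ∀ q : ℕ, 2 ≤ q → ∀ k : ℕ, (k + 1 : ℝ) ≤ A * ((q : ℝ) ^ ε) ^ k := by
  set b : ℝ := 2 ^ ε
  have hb : 1 < b := Real.one_lt_rpow one_lt_two hε
  have hb0 : 0 < b - 1 := sub_pos.mpr hb
  refine ⟨1 + 1 / (b - 1), le_add_of_nonneg_right (by positivity), fun q hq k => ?_⟩
  have hbernoulli : 1 + (k : ℝ) * (b - 1) ≤ b ^ k := by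
    simpa using one_add_mul_le_pow (a := b - 1) (by linarith) k
  have hk : (k : ℝ) ≤ 1 / (b - 1) * b ^ k := by
    rw [one_div, inv_mul_eq_div, le_div_iff₀ hb0]
    linarith
  calc (k + 1 : ℝ) ≤ 1 / (b - 1) * b ^ k + b ^ k := add_le_add hk (one_le_pow₀ hb.le)
    _ = (1 + 1 / (b - 1)) * b ^ k := by ring
    _ ≤ (1 + 1 / (b - 1)) * ((q : ℝ) ^ ε) ^ k := by
        gcongr
        exact Real.rpow_le_rpow zero_le_two (mod_cast hq) hε.le

lemma exists_forall_add_one_le_rpow_pow {ε : ℝ} (hε : 0 < ε) :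
    ∃ L : ℕ, ∀ q : ℕ, L ≤ q → ∀ k : ℕ, (k + 1 : ℝ) ≤ ((q : ℝ) ^ ε) ^ k := by
  have htendsto := (tendsto_rpow_atTop hε).comp (tendsto_natCast_atTop_atTop (R := ℝ))
  obtain ⟨L, hL⟩ := Filter.eventually_atTop.mp (htendsto.eventually_ge_atTop 2)
  refine ⟨L, fun q hq k => ?_⟩
  calc (k + 1 : ℝ) ≤ 2 ^ k := mod_cast Nat.lt_two_pow_self (n := k)
    _ ≤ ((q : ℝ) ^ ε) ^ k := by
        gcongr
        exact hL q hq

lemma natCast_rpow_eq_prod_primeFactors {n : ℕ} (hn : n ≠ 0) (ε : ℝ) :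
    (n : ℝ) ^ ε = ∏ q ∈ n.primeFactors, ((q : ℝ) ^ ε) ^ n.factorization q := by
  conv_lhs => rw [← Nat.prod_factorization_pow_eq_self hn]
  rw [Finsupp.prod, Nat.support_factorization, Nat.cast_prod,
    ← Real.finsetProd_rpow _ _ fun q _ => by positivity]
  refine prod_congr rfl fun q _ => ?_
  rw [Nat.cast_pow, Real.rpow_pow_comm (Nat.cast_nonneg q)]

theorem exists_card_divisors_le_mul_rpow {ε : ℝ} (hε : 0 < ε) :
    ∃ C : ℝ, 1 ≤ C ∧ ∀ n : ℕ, n ≠ 0 → (#n.divisors : ℝ) ≤ C * (n : ℝ) ^ ε := by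
  obtain ⟨A, hA, hsmall⟩ := exists_add_one_le_mul_rpow_pow hε
  obtain ⟨L, hlarge⟩ := exists_forall_add_one_le_rpow_pow hε
  refine ⟨A ^ L, one_le_pow₀ hA, fun n hn => ?_⟩
  have hfactor : ∀ q ∈ n.primeFactors, (n.factorization q + 1 : ℝ) ≤
      (if q < L then A else 1) * ((q : ℝ) ^ ε) ^ n.factorization q := by
    intro q hq
    split_ifs with hqL
    · exact hsmall q (Nat.prime_of_mem_primeFactors hq).two_le _
    · rw [one_mul]
      exact hlarge q (not_lt.mp hqL) _
  have hcard : #(n.primeFactors.filter (· < L)) ≤ L := by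
    refine (card_le_card fun q hq => ?_).trans_eq (card_range L)
    exact mem_range.mpr (mem_filter.mp hq).2
  calc (#n.divisors : ℝ) = ∏ q ∈ n.primeFactors, (n.factorization q + 1 : ℝ) := by
        rw [Nat.card_divisors hn]
        push_cast
        rfl
    _ ≤ ∏ q ∈ n.primeFactors, (if q < L then A else 1) * ((q : ℝ) ^ ε) ^ n.factorization q :=
        prod_le_prod (fun _ _ => by positivity) hfactor
    _ = A ^ #(n.primeFactors.filter (· < L)) * (n : ℝ) ^ ε := by
        rw [prod_mul_distrib, ← prod_filter, prod_const, natCast_rpow_eq_prod_primeFactors hn]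
    _ ≤ A ^ L * (n : ℝ) ^ ε := by gcongr

end DivisorBound

section Energy

/-- The index set `{1, …, K} × {1, …, N}` of the pairs `(k, n)`. -/
def pairBox (K N : ℕ) : Finset (ℕ × ℕ) := Icc 1 K ×ˢ Icc 1 N

/-- The argument `k + m * n` of the character, for `y = (k, n)`. -/
def affineEval (m : ℕ) (y : ℕ × ℕ) : ℕ := y.1 + m * y.2

/-- Equality of the fractions `(k + m * n) / (a + m * b)` for `m = m₁`, `((k, n), (a, b)) = q₁`
and for `m = m₂`, `((k, n), (a, b)) = q₂`, with denominators cleared. -/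
abbrev SameFrac (m₁ m₂ : ℕ) (q₁ q₂ : (ℕ × ℕ) × ℕ × ℕ) : Prop :=
  affineEval m₁ q₁.1 * affineEval m₂ q₂.2 = affineEval m₂ q₂.1 * affineEval m₁ q₁.2

/-- The `((k, n), (a, b))` for which the fraction `(k + m * n) / (a + m * b)` depends on `m`. -/
def nondegenerate (K N A B : ℕ) : Finset ((ℕ × ℕ) × ℕ × ℕ) :=
  {q ∈ pairBox K N ×ˢ pairBox A B | q.1.1 * q.2.2 ≠ q.1.2 * q.2.1}

lemma card_pairBox (K N : ℕ) : #(pairBox K N) = K * N := by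
  simp [pairBox]

lemma mem_pairBox {K N : ℕ} {y : ℕ × ℕ} :
    y ∈ pairBox K N ↔ (1 ≤ y.1 ∧ y.1 ≤ K) ∧ 1 ≤ y.2 ∧ y.2 ≤ N := by
  rw [pairBox, mem_product, mem_Icc, mem_Icc]

lemma affineEval_pos {K N : ℕ} {y : ℕ × ℕ} (hy : y ∈ pairBox K N) (m : ℕ) : 0 < affineEval m y :=
  Nat.add_pos_left (mem_pairBox.mp hy).1.1 _

lemma affineEval_le {K M N m : ℕ} {y : ℕ × ℕ} (hy : y ∈ pairBox K N) (hm : m ≤ M) :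
    affineEval m y ≤ K + M * N :=
  Nat.add_le_add (mem_pairBox.mp hy).1.2 (Nat.mul_le_mul hm (mem_pairBox.mp hy).2.2)

lemma card_degenerate_le {K B D : ℕ} (N A : ℕ)
    (hD : ∀ W ≤ K * B, #W.divisors ≤ D) :
    #{q ∈ pairBox K N ×ˢ pairBox A B | q.1.1 * q.2.2 = q.1.2 * q.2.1} ≤ D * (K * B) := by
  rw [← card_pairBox K B]
  refine card_le_mul_card_image_of_maps_to (f := fun q => (q.1.1, q.2.2)) (fun q hq => ?_) D
    fun y hy => ?_
  · simp only [mem_filter, mem_product, mem_pairBox] at hq ⊢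
    tauto
  · obtain ⟨⟨hk, hkK⟩, hb, hbB⟩ := mem_pairBox.mp hy
    have hpos : 0 < y.1 * y.2 := Nat.mul_pos hk hb
    refine le_trans ?_ (hD _ (Nat.mul_le_mul hkK hbB))
    refine card_le_card_of_injOn (fun q => q.1.2) (fun q hq => ?_) fun q hq q' hq' hn => ?_
    · simp only [coe_filter, mem_filter, Set.mem_ofPred_eq] at hq
      obtain ⟨⟨-, hprod⟩, rfl⟩ := hq
      exact Nat.mem_divisors.mpr ⟨⟨_, hprod⟩, hpos.ne'⟩
    · simp only [coe_filter, mem_filter, mem_product, mem_pairBox, Set.mem_ofPred_eq,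
        Prod.ext_iff] at hq hq' hn ⊢
      obtain ⟨⟨⟨⟨-, hn₀, -⟩, -⟩, hprod⟩, hk, hb⟩ := hq
      obtain ⟨⟨-, hprod'⟩, hk', hb'⟩ := hq'
      refine ⟨⟨hk.trans hk'.symm, hn⟩, ?_, hb.trans hb'.symm⟩
      apply Nat.eq_of_mul_eq_mul_left hn₀
      rw [← hprod, hk, hb, ← hk', ← hb', hprod', hn]

lemma eq_of_affineEval_mul_eq {k n a b n' b' m m' : ℕ} (hdet : k * b ≠ n * a) (hb' : b' ≠ 0)
    (h : affineEval m (k, n) * b' = n' * affineEval m (a, b))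
    (h' : affineEval m' (k, n) * b' = n' * affineEval m' (a, b)) : m = m' := by
  by_contra hne
  simp only [affineEval] at h h'
  zify at hdet hb' h h' hne
  have hslope : (n : ℤ) * b' = n' * b := by
    apply mul_left_cancel₀ (sub_ne_zero.mpr hne)
    linear_combination h - h'
  have hconst : (k : ℤ) * b' = n' * a := by linear_combination h - m * hslope
  apply hdet
  apply mul_left_cancel₀ hb'
  linear_combination b * hconst - a * hslope

lemma eq_of_sameFrac {m u u' : ℕ} {q₁ q₂ : (ℕ × ℕ) × ℕ × ℕ}
    (hne : affineEval m q₁.1 * q₂.2.2 ≠ q₂.1.2 * affineEval m q₁.2)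
    (h : SameFrac m u q₁ q₂) (h' : SameFrac m u' q₁ q₂) : u = u' := by
  rw [SameFrac, affineEval.eq_1 u, affineEval.eq_1 u] at h
  rw [SameFrac, affineEval.eq_1 u', affineEval.eq_1 u'] at h'
  zify at hne h h' ⊢
  apply mul_right_cancel₀ (sub_ne_zero.mpr hne)
  linear_combination h - h'

-- For all but at most one `m₁`, the collision is a nontrivial linear equation for `m₂`.
lemma card_sameFrac_le {q₁ q₂ : (ℕ × ℕ) × ℕ × ℕ} (h₁ : q₁.1.1 * q₁.2.2 ≠ q₁.1.2 * q₁.2.1)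
    (h₂ : q₂.2.2 ≠ 0) (s : Finset ℕ) :
    #{x ∈ s ×ˢ s | SameFrac x.1 x.2 q₁ q₂} ≤ 2 * #s := by
  set exc := {m ∈ s | affineEval m q₁.1 * q₂.2.2 = q₂.1.2 * affineEval m q₁.2}
  have hexc : #exc ≤ 1 := card_le_one.mpr fun m hm m' hm' =>
    eq_of_affineEval_mul_eq h₁ h₂ (mem_filter.mp hm).2 (mem_filter.mp hm').2
  rw [← card_filter_add_card_filter_not fun x : ℕ × ℕ => x.1 ∈ exc, two_mul]
  refine Nat.add_le_add ?_ ?_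
  · calc _ ≤ #(exc ×ˢ s) := card_le_card fun x hx => by
          simp only [mem_filter, mem_product] at hx ⊢
          exact ⟨hx.2, hx.1.1.2⟩
      _ ≤ #s := by
          rw [card_product]
          exact (Nat.mul_le_mul_right _ hexc).trans_eq (one_mul _)
  · refine card_le_card_of_injOn Prod.fst (fun x hx => ?_) ?_
    · simp only [coe_filter, mem_filter, mem_product, Set.mem_ofPred_eq] at hx
      exact hx.1.1.1
    · rintro ⟨m, u⟩ hx ⟨_, u'⟩ hx' rfl
      simp only [coe_filter, mem_filter, mem_product, Set.mem_ofPred_eq, exc, not_and] at hx hx'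
      rw [eq_of_sameFrac (hx.2 hx.1.1.1) hx.1.2 hx'.1.2]

lemma card_affineEval_eq_le (K N x : ℕ) {m : ℕ} (hm : 0 < m) :
    #{y ∈ pairBox K N | affineEval m y = x} ≤ K / m + 1 := by
  refine (card_le_card_of_injOn (t := range (K / m + 1)) (fun y => (y.1 - 1) / m) ?_ ?_).trans_eq
    (card_range _)
  · intro y hy
    simp only [coe_filter, mem_pairBox, Set.mem_ofPred_eq] at hy
    exact mem_coe.mpr (mem_range.mpr (Nat.lt_succ_of_le (Nat.div_le_div_right (by lia))))
  · rintro ⟨k, n⟩ hy ⟨k', n'⟩ hy' hdiv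
    rw [mem_coe, mem_filter, mem_pairBox] at hy hy'
    simp only [affineEval] at hy hy' hdiv
    have hmod : (k - 1) % m = (k' - 1) % m := by
      simpa using congrArg (· % m) (show k - 1 + m * n = k' - 1 + m * n' by lia)
    have hk : k = k' := by
      have := Nat.div_add_mod (k - 1) m
      rw [hdiv, hmod, Nat.div_add_mod] at this
      lia
    have hn : n = n' := Nat.eq_of_mul_eq_mul_left hm (by lia)
    rw [hk, hn]

lemma card_affineEval_mul_eq_le (K N A B : ℕ) {m m' W : ℕ} (hm : 0 < m) (hm' : 0 < m')
    (hW : W ≠ 0) :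
    #{q ∈ pairBox K N ×ˢ pairBox A B | affineEval m q.1 * affineEval m' q.2 = W} ≤
      #W.divisors * ((K / m + 1) * (A / m' + 1)) := by
  have hcard : #W.divisorsAntidiagonal = #W.divisors := by
    rw [← Nat.map_div_right_divisors, card_map]
  rw [← hcard, mul_comm]
  refine card_le_mul_card_image_of_maps_to
    (f := fun q => (affineEval m q.1, affineEval m' q.2)) (fun q hq => ?_) _ fun x _ => ?_
  · exact Nat.mem_divisorsAntidiagonal.mpr ⟨(mem_filter.mp hq).2, hW⟩
  · calc _ ≤ #({y ∈ pairBox K N | affineEval m y = x.1} ×ˢ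
            {z ∈ pairBox A B | affineEval m' z = x.2}) :=
          card_le_card fun q hq => by
            simp only [mem_filter, mem_product, Prod.ext_iff] at hq ⊢
            tauto
      _ ≤ (K / m + 1) * (A / m' + 1) := by
          rw [card_product]
          exact Nat.mul_le_mul (card_affineEval_eq_le K N x.1 hm)
            (card_affineEval_eq_le A B x.2 hm')

lemma card_collisions_le {K M N A B D m₁ m₂ : ℕ}
    (hD : ∀ W ≤ (K + M * N) * (A + M * B), #W.divisors ≤ D)
    (hm₁ : m₁ ∈ Icc 1 M) (hm₂ : m₂ ∈ Icc 1 M) :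
    #{x ∈ (pairBox K N ×ˢ pairBox A B) ×ˢ (pairBox K N ×ˢ pairBox A B) |
        SameFrac m₁ m₂ x.1 x.2} ≤
      D * ((K / m₂ + 1) * (A / m₁ + 1)) * (K * N * (A * B)) := by
  rw [mem_Icc] at hm₁ hm₂
  rw [← card_pairBox K, ← card_pairBox A, ← card_product]
  refine card_le_mul_card_image_of_maps_to (f := fun x => (x.1.1, x.2.2)) (fun x hx => ?_) _
    fun w hw => ?_
  · simp only [mem_filter, mem_product] at hx ⊢
    exact ⟨hx.1.1.1, hx.1.2.2⟩
  · obtain ⟨hy, hz⟩ := mem_product.mp hw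
    set W := affineEval m₁ w.1 * affineEval m₂ w.2
    have hW : 0 < W := Nat.mul_pos (affineEval_pos hy m₁) (affineEval_pos hz m₂)
    calc _ ≤ #{q ∈ pairBox K N ×ˢ pairBox A B | affineEval m₂ q.1 * affineEval m₁ q.2 = W} := by
          refine card_le_card_of_injOn (fun x => (x.2.1, x.1.2)) (fun x hx => ?_) ?_
          · simp only [coe_filter, mem_filter, mem_product, Set.mem_ofPred_eq] at hx ⊢
            obtain ⟨⟨hx, hcoll⟩, rfl⟩ := hx
            exact ⟨⟨hx.2.1, hx.1.2⟩, hcoll.symm⟩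
          · intro x hx x' hx' h
            simp only [coe_filter, mem_filter, Set.mem_ofPred_eq, Prod.ext_iff] at hx hx' h ⊢
            lia
      _ ≤ #W.divisors * ((K / m₂ + 1) * (A / m₁ + 1)) :=
          card_affineEval_mul_eq_le K N A B hm₂.1 hm₁.1 hW.ne'
      _ ≤ D * ((K / m₂ + 1) * (A / m₁ + 1)) := Nat.mul_le_mul_right _ <|
          hD W (Nat.mul_le_mul (affineEval_le hy hm₁.2) (affineEval_le hz hm₂.2))

lemma card_energy_le {K M N A B D : ℕ}
    (hD : ∀ W ≤ (K + M * N) * (A + M * B), #W.divisors ≤ D) :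
    #{x ∈ ((Icc 1 M ×ˢ Icc 1 M) ×ˢ nondegenerate K N A B) ×ˢ
          ((Icc 1 M ×ˢ Icc 1 M) ×ˢ nondegenerate K N A B) |
        SameFrac x.1.1.1 x.2.1.1 x.1.2 x.2.2 ∧ SameFrac x.1.1.2 x.2.1.2 x.1.2 x.2.2} ≤
      2 * M * (D * (K * N * (A * B)) *
        ((∑ m ∈ Icc 1 M, (K / m + 1)) * ∑ m ∈ Icc 1 M, (A / m + 1))) := by
  set collisions := {w ∈ (Icc 1 M ×ˢ Icc 1 M) ×ˢ
      (pairBox K N ×ˢ pairBox A B) ×ˢ (pairBox K N ×ˢ pairBox A B) |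
    SameFrac w.1.1 w.1.2 w.2.1 w.2.2}
  have hcollisions : #collisions ≤ D * (K * N * (A * B)) *
      ((∑ m ∈ Icc 1 M, (K / m + 1)) * ∑ m ∈ Icc 1 M, (A / m + 1)) := by
    rw [card_filter, sum_product, sum_product, mul_comm (∑ m ∈ Icc 1 M, (K / m + 1)),
      sum_mul_sum, mul_sum]
    refine sum_le_sum fun m₁ hm₁ => ?_
    rw [mul_sum]
    refine sum_le_sum fun m₂ hm₂ => ?_
    rw [← card_filter]
    exact (card_collisions_le hD hm₁ hm₂).trans_eq (by ring)
  refine le_trans ?_ (Nat.mul_le_mul_left (2 * M) hcollisions)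
  refine card_le_mul_card_image_of_maps_to
    (f := fun x => ((x.1.1.1, x.2.1.1), (x.1.2, x.2.2))) (fun x hx => ?_) _ fun w hw => ?_
  · simp only [nondegenerate, mem_filter, mem_product, collisions] at hx ⊢
    tauto
  · by_cases hnd : w.2.1 ∈ nondegenerate K N A B
    · rw [nondegenerate, mem_filter] at hnd
      simp only [mem_filter, mem_product, mem_pairBox, collisions] at hw
      refine le_trans ?_ ((card_sameFrac_le hnd.2 (q₂ := w.2.2) (by lia) (Icc 1 M)).trans_eq
        (by rw [Nat.card_Icc, Nat.add_sub_cancel]))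
      refine card_le_card_of_injOn (fun x => (x.1.1.2, x.2.1.2)) (fun x hx => ?_) ?_
      · simp only [coe_filter, mem_filter, mem_product, Set.mem_ofPred_eq] at hx ⊢
        obtain ⟨⟨hx, hsame⟩, rfl⟩ := hx
        exact ⟨⟨hx.1.1.2, hx.2.1.2⟩, hsame.2⟩
      · intro x hx x' hx' h
        simp only [coe_filter, mem_filter, Set.mem_ofPred_eq, Prod.ext_iff] at hx hx' h ⊢
        lia
    · rw [card_eq_zero.mpr (filter_eq_empty_iff.mpr fun x hx hxw => hnd ?_)]
      · exact Nat.zero_le _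
      · rw [← hxw]
        exact (mem_product.mp (mem_product.mp (mem_filter.mp hx).1).1).2

end Energy

section Holder

variable {ι Z : Type*} [DecidableEq Z] [Fintype Z]

lemma sum_card_fiber_sq (I : Finset ι) (z : ι → Z) :
    ∑ y, #{i ∈ I | z i = y} ^ 2 = #{x ∈ I ×ˢ I | z x.1 = z x.2} := by
  rw [card_eq_sum_card_fiberwise (f := fun x => z x.1) (t := univ) fun _ _ => mem_univ _]
  refine sum_congr rfl fun y _ => ?_
  rw [sq, ← card_product, filter_filter, ← filter_product]
  refine congrArg card (filter_congr fun x _ => ⟨?_, ?_⟩)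
  · rintro ⟨h₁, h₂⟩
    exact ⟨h₁.trans h₂.symm, h₁⟩
  · rintro ⟨h, h₁⟩
    exact ⟨h₁, h ▸ h₁⟩

lemma sum_comp_pow_le_energy_mul (I : Finset ι) (z : ι → Z) {f : Z → ℝ} (hf : ∀ y, 0 ≤ f y)
    (r : ℕ) :
    (∑ i ∈ I, f (z i)) ^ (2 * (r + 1)) ≤
      (#I : ℝ) ^ (2 * r) * (#{x ∈ I ×ˢ I | z x.1 = z x.2} * ∑ y, f y ^ (2 * (r + 1))) := by
  have hfiber : ∑ i ∈ I, f (z i) ^ (r + 1) = ∑ y, (#{i ∈ I | z i = y} : ℝ) * f y ^ (r + 1) := by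
    rw [← sum_fiberwise I z]
    refine sum_congr rfl fun y _ => ?_
    rw [← nsmul_eq_mul, ← sum_const]
    exact sum_congr rfl fun i hi => by rw [(mem_filter.mp hi).2]
  calc (∑ i ∈ I, f (z i)) ^ (2 * (r + 1)) = ((∑ i ∈ I, f (z i)) ^ (r + 1)) ^ 2 := by
        rw [mul_comm, pow_mul]
    _ ≤ ((#I : ℝ) ^ r * ∑ i ∈ I, f (z i) ^ (r + 1)) ^ 2 := by
        have := sum_nonneg fun i (_ : i ∈ I) => hf (z i)
        gcongr
        exact pow_sum_le_card_mul_sum_pow (fun i _ => hf _) r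
    _ = (#I : ℝ) ^ (2 * r) * (∑ y, (#{i ∈ I | z i = y} : ℝ) * f y ^ (r + 1)) ^ 2 := by
        rw [hfiber, mul_pow, ← pow_mul, mul_comm r]
    _ ≤ (#I : ℝ) ^ (2 * r) *
          ((∑ y, (#{i ∈ I | z i = y} : ℝ) ^ 2) * ∑ y, (f y ^ (r + 1)) ^ 2) := by
        gcongr
        exact sum_mul_sq_le_sq_mul_sq _ _ _
    _ = _ := by
        rw [← sum_card_fiber_sq]
        push_cast
        simp only [← pow_mul, mul_comm (r + 1)]

end Holder

section CauchySchwarz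

variable {ι Y : Type*}

lemma sum_sq_norm_sum_le (s : Finset ι) (t : Finset Y) {α : ι → ℂ} (hα : ∀ i, ‖α i‖ ≤ 1)
    (φ : ι → Y → ℂ) :
    ∑ y ∈ t, ‖∑ i ∈ s, α i * φ i y‖ ^ 2 ≤
      ∑ i ∈ s, ∑ j ∈ s, ‖∑ y ∈ t, φ i y * star (φ j y)‖ := by
  have hexpand : ((∑ y ∈ t, ‖∑ i ∈ s, α i * φ i y‖ ^ 2 : ℝ) : ℂ) =
      ∑ i ∈ s, ∑ j ∈ s, (α i * star (α j)) * ∑ y ∈ t, φ i y * star (φ j y) := by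
    calc _ = ∑ y ∈ t, (∑ i ∈ s, α i * φ i y) * star (∑ i ∈ s, α i * φ i y) := by
          push_cast
          exact sum_congr rfl fun y _ => (Complex.mul_conj' _).symm
      _ = ∑ y ∈ t, ∑ i ∈ s, ∑ j ∈ s, (α i * star (α j)) * (φ i y * star (φ j y)) := by
          refine sum_congr rfl fun y _ => ?_
          rw [star_sum, sum_mul_sum]
          refine sum_congr rfl fun i _ => sum_congr rfl fun j _ => ?_
          rw [star_mul']
          ring
      _ = _ := by
          rw [sum_comm]
          refine sum_congr rfl fun i _ => ?_
          rw [sum_comm]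
          exact sum_congr rfl fun j _ => (mul_sum ..).symm
  calc _ = ‖((∑ y ∈ t, ‖∑ i ∈ s, α i * φ i y‖ ^ 2 : ℝ) : ℂ)‖ := by
        rw [Complex.norm_of_nonneg (by positivity)]
    _ ≤ _ := by
        rw [hexpand]
        refine norm_sum_le_of_le _ fun i _ => norm_sum_le_of_le _ fun j _ => ?_
        rw [norm_mul, norm_mul, norm_star]
        exact mul_le_of_le_one_left (norm_nonneg _)
          (mul_le_one₀ (hα i) (norm_nonneg _) (hα j))

lemma sq_norm_sum_mul_sum_le (s : Finset ι) (t : Finset Y) {α : ι → ℂ} {β : Y → ℂ}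
    (hα : ∀ i, ‖α i‖ ≤ 1) (hβ : ∀ y, ‖β y‖ ≤ 1) (φ : ι → Y → ℂ) :
    ‖∑ y ∈ t, β y * ∑ i ∈ s, α i * φ i y‖ ^ 2 ≤
      #t * ∑ i ∈ s, ∑ j ∈ s, ‖∑ y ∈ t, φ i y * star (φ j y)‖ := by
  calc _ ≤ (∑ y ∈ t, ‖∑ i ∈ s, α i * φ i y‖) ^ 2 := by
        gcongr
        refine norm_sum_le_of_le _ fun y _ => ?_
        rw [norm_mul]
        exact mul_le_of_le_one_left (norm_nonneg _) (hβ y)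
    _ ≤ #t * ∑ y ∈ t, ‖∑ i ∈ s, α i * φ i y‖ ^ 2 := sq_sum_le_card_mul_sum_sq
    _ ≤ _ := by
        gcongr
        exact sum_sq_norm_sum_le s t hα φ

end CauchySchwarz

section Shift

variable {E : Type*} [SeminormedAddCommGroup E]

lemma norm_sum_Icc_sub_sum_shift_le {f : ℕ → E} (hf : ∀ k, ‖f k‖ ≤ 1) (K s : ℕ) :
    ‖∑ k ∈ Icc 1 K, f k - ∑ k ∈ Icc 1 K, f (k + s)‖ ≤ 2 * s := by
  have hshort : ∀ a, ‖∑ k ∈ Ico a (a + s), f k‖ ≤ s := fun a =>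
    (norm_sum_le_of_le _ fun k _ => hf k).trans_eq (by simp)
  have hsplit : ∑ k ∈ Icc 1 K, f k - ∑ k ∈ Icc 1 K, f (k + s) =
      ∑ k ∈ Ico 1 (1 + s), f k - ∑ k ∈ Ico (K + 1) (K + 1 + s), f k := by
    rw [← Ico_add_one_right_eq_Icc, sum_Ico_add', sub_eq_sub_iff_add_eq_add,
      sum_Ico_consecutive f (by lia) (by lia), sum_Ico_consecutive f (by lia) (by lia)]
  rw [hsplit, two_mul]
  exact (norm_sub_le _ _).trans (add_le_add (hshort _) (hshort _))

variable {F : ℕ × ℕ → E}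

lemma norm_sum_pairBox_sub_sum_shift_le (hF : ∀ y, ‖F y‖ ≤ 1) (K N : ℕ) (v : ℕ × ℕ) :
    ‖∑ y ∈ pairBox K N, F y - ∑ y ∈ pairBox K N, F (y + v)‖ ≤ 2 * (v.1 * N + v.2 * K) := by
  have hfst : ‖∑ y ∈ pairBox K N, F y - ∑ y ∈ pairBox K N, F (y.1 + v.1, y.2)‖ ≤
      N * (2 * v.1) := by
    rw [pairBox, sum_product_right, sum_product_right, ← sum_sub_distrib]
    exact (norm_sum_le_of_le _ fun n _ =>
      norm_sum_Icc_sub_sum_shift_le (fun k => hF (k, n)) K v.1).trans_eq (by simp)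
  have hsnd : ‖∑ y ∈ pairBox K N, F (y.1 + v.1, y.2) - ∑ y ∈ pairBox K N, F (y + v)‖ ≤
      K * (2 * v.2) := by
    rw [pairBox, sum_product, sum_product, ← sum_sub_distrib]
    exact (norm_sum_le_of_le _ fun k _ =>
      norm_sum_Icc_sub_sum_shift_le (fun n => hF (k + v.1, n)) N v.2).trans_eq (by simp)
  calc _ ≤ _ := norm_sub_le_norm_sub_add_norm_sub _ _ _
    _ ≤ (N * (2 * v.1) + K * (2 * v.2) : ℝ) := add_le_add hfst hsnd
    _ = _ := by ring

lemma mul_norm_sum_pairBox_le [NormedSpace ℝ E] (hF : ∀ y, ‖F y‖ ≤ 1) (K N A B H : ℕ) :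
    (A * B * H : ℝ) * ‖∑ y ∈ pairBox K N, F y‖ ≤
      ∑ q ∈ pairBox K N ×ˢ pairBox A B, ‖∑ t ∈ Icc 1 H, F (q.1 + t • q.2)‖ +
        A * B * H * (2 * H * (A * N + B * K)) := by
  set S := ∑ y ∈ pairBox K N, F y
  have hcard : (#(pairBox A B ×ˢ Icc 1 H) : ℝ) = A * B * H := by
    simp [card_pairBox]
  have hshift : ∀ w ∈ pairBox A B ×ˢ Icc 1 H,
      ‖S - ∑ y ∈ pairBox K N, F (y + w.2 • w.1)‖ ≤ 2 * H * (A * N + B * K) := by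
    rintro ⟨⟨a, b⟩, t⟩ hw
    rw [mem_product, mem_pairBox, mem_Icc] at hw
    obtain ⟨⟨⟨-, ha⟩, -, hb⟩, -, ht⟩ := hw
    refine (norm_sum_pairBox_sub_sum_shift_le hF K N _).trans ?_
    simp only [Prod.smul_mk, smul_eq_mul, Nat.cast_mul]
    calc (2 * (t * a * N + t * b * K) : ℝ) ≤ 2 * (H * A * N + H * B * K) := by gcongr
      _ = _ := by ring
  have hreorder : ∑ w ∈ pairBox A B ×ˢ Icc 1 H, ∑ y ∈ pairBox K N, F (y + w.2 • w.1) =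
      ∑ q ∈ pairBox K N ×ˢ pairBox A B, ∑ t ∈ Icc 1 H, F (q.1 + t • q.2) := by
    rw [sum_product, sum_product, sum_comm (s := pairBox K N)]
    exact sum_congr rfl fun z _ => sum_comm
  calc (A * B * H : ℝ) * ‖S‖ = ‖∑ _w ∈ pairBox A B ×ˢ Icc 1 H, S‖ := by
        rw [sum_const, ← Nat.cast_smul_eq_nsmul ℝ, norm_smul, Real.norm_natCast, hcard]
    _ ≤ ‖∑ w ∈ pairBox A B ×ˢ Icc 1 H, ∑ y ∈ pairBox K N, F (y + w.2 • w.1)‖ +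
          ‖∑ w ∈ pairBox A B ×ˢ Icc 1 H, (S - ∑ y ∈ pairBox K N, F (y + w.2 • w.1))‖ := by
        rw [sum_sub_distrib]
        exact norm_le_norm_add_norm_sub' _ _
    _ ≤ _ := by
        rw [hreorder, ← hcard, ← nsmul_eq_mul, ← sum_const]
        exact add_le_add (norm_sum_le _ _) (norm_sum_le_of_le _ hshift)

end Shift

section Amplification

variable {p : ℕ}

lemma affineEval_mul_lt {K M N A B m m' : ℕ} {q q' : (ℕ × ℕ) × ℕ × ℕ}
    (hsmall : (K + M * N) * (A + M * B) < p) (hm : m ∈ Icc 1 M)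
    (hm' : m' ∈ Icc 1 M) (hq : q ∈ pairBox K N ×ˢ pairBox A B)
    (hq' : q' ∈ pairBox K N ×ˢ pairBox A B) : affineEval m q.1 * affineEval m' q'.2 < p :=
  (Nat.mul_le_mul (affineEval_le (mem_product.mp hq).1 (mem_Icc.mp hm).2)
    (affineEval_le (mem_product.mp hq').2 (mem_Icc.mp hm').2)).trans_lt hsmall

variable [Fact p.Prime]

/-- The residue mod `p` of the fraction `(k + m * n) / (a + m * b)` for `q = ((k, n), (a, b))`. -/
def frac (p : ℕ) [Fact p.Prime] (m : ℕ) (q : (ℕ × ℕ) × ℕ × ℕ) : ZMod p :=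
  affineEval m q.1 / affineEval m q.2

/-- The summand `χ (k + m * n) * conj (χ (k + m' * n))`, for `y = (k, n)`, that is left after the
Cauchy–Schwarz inequality. -/
noncomputable def linCorr (χ : MulChar (ZMod p) ℂ) (m m' : ℕ) (y : ℕ × ℕ) : ℂ :=
  χ (affineEval m y) * star (χ (affineEval m' y))

/-- The residues modulo `p` of `1, …, H`. -/
def residues (p H : ℕ) : Finset (ZMod p) := (Icc 1 H).image Nat.cast

/-- The sum of the correlation sums at the fractions attached to the nondegenerate quadruples. -/
noncomputable def fracCorrSum (χ : MulChar (ZMod p) ℂ) (K M N A B H : ℕ) : ℝ :=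
  ∑ m ∈ Icc 1 M, ∑ m' ∈ Icc 1 M, ∑ q ∈ nondegenerate K N A B,
    ‖corrSum χ (residues p H) (frac p m q) (frac p m' q)‖

lemma card_residues_le (p H : ℕ) : #(residues p H) ≤ H :=
  card_image_le.trans_eq (by simp)

lemma norm_linCorr_le_one (χ : MulChar (ZMod p) ℂ) (m m' : ℕ) (y : ℕ × ℕ) :
    ‖linCorr χ m m' y‖ ≤ 1 := by
  rw [linCorr, norm_mul, norm_star]
  exact mul_le_one₀ (norm_mulChar_apply_le_one χ _) (norm_nonneg _)
    (norm_mulChar_apply_le_one χ _)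

section

variable {K M N A B H m m' : ℕ} {q q' : (ℕ × ℕ) × ℕ × ℕ}

lemma cast_affineEval_snd_ne_zero (hsmall : (K + M * N) * (A + M * B) < p) (hm : m ∈ Icc 1 M)
    (hq : q ∈ pairBox K N ×ˢ pairBox A B) : (affineEval m q.2 : ZMod p) ≠ 0 := by
  have hpos := affineEval_pos (mem_product.mp hq).2 m
  rw [Ne, ZMod.natCast_eq_zero_iff]
  refine Nat.not_dvd_of_pos_of_lt hpos (lt_of_le_of_lt ?_ (affineEval_mul_lt hsmall hm hm hq hq))
  exact Nat.le_mul_of_pos_left _ (affineEval_pos (mem_product.mp hq).1 m)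

lemma sameFrac_of_frac_eq (hsmall : (K + M * N) * (A + M * B) < p) (hm : m ∈ Icc 1 M)
    (hm' : m' ∈ Icc 1 M) (hq : q ∈ pairBox K N ×ˢ pairBox A B)
    (hq' : q' ∈ pairBox K N ×ˢ pairBox A B) (h : frac p m q = frac p m' q') :
    SameFrac m m' q q' := by
  rw [frac, frac, div_eq_div_iff (cast_affineEval_snd_ne_zero hsmall hm hq)
    (cast_affineEval_snd_ne_zero hsmall hm' hq')] at h
  exact_mod_cast CharP.natCast_injOn_Iio (ZMod p) p (affineEval_mul_lt hsmall hm hm' hq hq')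
    (affineEval_mul_lt hsmall hm' hm hq' hq) (by exact_mod_cast h)

lemma cast_affineEval_add_smul (hsmall : (K + M * N) * (A + M * B) < p) (hm : m ∈ Icc 1 M)
    (hq : q ∈ pairBox K N ×ˢ pairBox A B) (t : ℕ) :
    (affineEval m (q.1 + t • q.2) : ZMod p) = affineEval m q.2 * (frac p m q + t) := by
  rw [frac, mul_add, mul_div_cancel₀ _ (cast_affineEval_snd_ne_zero hsmall hm hq)]
  simp only [affineEval, Prod.fst_add, Prod.snd_add, Prod.smul_fst, Prod.smul_snd, smul_eq_mul]
  push_cast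
  ring

lemma norm_sum_linCorr_shift_le (χ : MulChar (ZMod p) ℂ) (hH : H < p)
    (hsmall : (K + M * N) * (A + M * B) < p) (hm : m ∈ Icc 1 M) (hm' : m' ∈ Icc 1 M)
    (hq : q ∈ pairBox K N ×ˢ pairBox A B) :
    ‖∑ t ∈ Icc 1 H, linCorr χ m m' (q.1 + t • q.2)‖ ≤
      ‖corrSum χ (residues p H) (frac p m q) (frac p m' q)‖ := by
  have hinj : Set.InjOn (Nat.cast : ℕ → ZMod p) (Icc 1 H) := fun t ht t' ht' =>
    CharP.natCast_injOn_Iio (ZMod p) p ((mem_Icc.mp ht).2.trans_lt hH)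
      ((mem_Icc.mp ht').2.trans_lt hH)
  have hfactor : ∑ t ∈ Icc 1 H, linCorr χ m m' (q.1 + t • q.2) =
      linCorr χ m m' q.2 * corrSum χ (residues p H) (frac p m q) (frac p m' q) := by
    rw [corrSum, residues, sum_image hinj, mul_sum]
    refine sum_congr rfl fun t _ => ?_
    rw [linCorr, linCorr, cast_affineEval_add_smul hsmall hm hq,
      cast_affineEval_add_smul hsmall hm' hq, map_mul, map_mul, star_mul']
    ring
  rw [hfactor, norm_mul]
  exact mul_le_of_le_one_left (norm_nonneg _) (norm_linCorr_le_one χ m m' q.2)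

end

variable {K M N A B D H : ℕ}

lemma mul_norm_sum_linCorr_le (χ : MulChar (ZMod p) ℂ) (hH : H < p)
    (hsmall : (K + M * N) * (A + M * B) < p)
    (hD : ∀ W ≤ (K + M * N) * (A + M * B), #W.divisors ≤ D) {m m' : ℕ} (hm : m ∈ Icc 1 M)
    (hm' : m' ∈ Icc 1 M) :
    (A * B * H : ℝ) * ‖∑ y ∈ pairBox K N, linCorr χ m m' y‖ ≤
      ∑ q ∈ nondegenerate K N A B, ‖corrSum χ (residues p H) (frac p m q) (frac p m' q)‖ +
        (H * (D * (K * B)) + A * B * H * (2 * H * (A * N + B * K))) := by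
  have hM : 0 < M := Nat.lt_of_lt_of_le (mem_Icc.mp hm).1 (mem_Icc.mp hm).2
  have hKB : K * B ≤ (K + M * N) * (A + M * B) :=
    Nat.mul_le_mul (Nat.le_add_right _ _) (Nat.le_add_left_of_le (Nat.le_mul_of_pos_left _ hM))
  refine (mul_norm_sum_pairBox_le (norm_linCorr_le_one χ m m') K N A B H).trans ?_
  rw [← sum_filter_add_sum_filter_not _ fun q => q.1.1 * q.2.2 ≠ q.1.2 * q.2.1, ← add_assoc]
  simp only [not_not]
  refine add_le_add_left (add_le_add (sum_le_sum fun q hq => ?_) ?_) _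
  · exact norm_sum_linCorr_shift_le χ hH hsmall hm hm' (mem_filter.mp hq).1
  · refine (sum_le_card_nsmul _ _ (H : ℝ) fun q _ => ?_).trans ?_
    · exact (norm_sum_le_of_le _ fun t _ => norm_linCorr_le_one χ m m' _).trans_eq (by simp)
    · rw [nsmul_eq_mul, mul_comm]
      gcongr
      exact_mod_cast card_degenerate_le N A fun W hW => hD W (hW.trans hKB)

lemma mul_sq_norm_sum_le (χ : MulChar (ZMod p) ℂ) (hH : H < p)
    (hsmall : (K + M * N) * (A + M * B) < p)
    (hD : ∀ W ≤ (K + M * N) * (A + M * B), #W.divisors ≤ D) {α : ℕ → ℂ} {β : ℕ × ℕ → ℂ}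
    (hα : ∀ m, ‖α m‖ ≤ 1) (hβ : ∀ y, ‖β y‖ ≤ 1) :
    (A * B * H : ℝ) *
        ‖∑ y ∈ pairBox K N, β y * ∑ m ∈ Icc 1 M, α m * χ (affineEval m y)‖ ^ 2 ≤
      K * N * (fracCorrSum χ K M N A B H +
        M * M * (H * (D * (K * B)) + A * B * H * (2 * H * (A * N + B * K)))) := by
  calc _ ≤ (A * B * H : ℝ) * (#(pairBox K N) *
          ∑ m ∈ Icc 1 M, ∑ m' ∈ Icc 1 M, ‖∑ y ∈ pairBox K N, linCorr χ m m' y‖) := by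
        gcongr
        exact sq_norm_sum_mul_sum_le _ _ hα hβ fun m y => χ (affineEval m y)
    _ = K * N * ∑ m ∈ Icc 1 M, ∑ m' ∈ Icc 1 M,
          (A * B * H : ℝ) * ‖∑ y ∈ pairBox K N, linCorr χ m m' y‖ := by
        simp only [← mul_sum, card_pairBox, Nat.cast_mul]
        ring
    _ ≤ K * N * ∑ m ∈ Icc 1 M, ∑ m' ∈ Icc 1 M,
          (∑ q ∈ nondegenerate K N A B,
              ‖corrSum χ (residues p H) (frac p m q) (frac p m' q)‖ +
            (H * (D * (K * B)) + A * B * H * (2 * H * (A * N + B * K)))) := by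
        gcongr with m hm m' hm'
        exact mul_norm_sum_linCorr_le χ hH hsmall hD hm hm'
    _ = _ := by
        simp only [fracCorrSum, sum_add_distrib, sum_const, Nat.card_Icc, Nat.add_sub_cancel,
          nsmul_eq_mul]
        ring

lemma fracCorrSum_pow_le {χ : MulChar (ZMod p) ℂ} (hχ : χ ≠ 1)
    (hsmall : (K + M * N) * (A + M * B) < p)
    (hD : ∀ W ≤ (K + M * N) * (A + M * B), #W.divisors ≤ D) (r : ℕ) :
    fracCorrSum χ K M N A B H ^ (2 * (r + 1)) ≤
      (M * M * (K * N * (A * B)) : ℕ) ^ (2 * r) *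
        ((2 * M * (D * (K * N * (A * B)) *
            ((∑ m ∈ Icc 1 M, (K / m + 1)) * ∑ m ∈ Icc 1 M, (A / m + 1))) : ℕ) *
          (((r + 1 : ℕ) : ℝ) ^ (2 * (r + 1)) * H ^ (r + 1) * p ^ 2 +
            (2 * (r + 1 : ℕ)) ^ 2 * p * H ^ (2 * (r + 1)))) := by
  set I := (Icc 1 M ×ˢ Icc 1 M) ×ˢ nondegenerate K N A B
  have hI : #I ≤ M * M * (K * N * (A * B)) := by
    rw [card_product, card_product, Nat.card_Icc, Nat.add_sub_cancel, ← card_pairBox K,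
      ← card_pairBox A, ← card_product (pairBox K N)]
    exact Nat.mul_le_mul_left _ (card_filter_le _ _)
  set z : (ℕ × ℕ) × (ℕ × ℕ) × ℕ × ℕ → ZMod p × ZMod p :=
    fun i => (frac p i.1.1 i.2, frac p i.1.2 i.2)
  have hE : #{x ∈ I ×ˢ I | z x.1 = z x.2} ≤ 2 * M * (D * (K * N * (A * B)) *
      ((∑ m ∈ Icc 1 M, (K / m + 1)) * ∑ m ∈ Icc 1 M, (A / m + 1))) := by
    refine le_trans (card_le_card fun x hx => ?_) (card_energy_le hD)
    obtain ⟨hxI, hz⟩ := mem_filter.mp hx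
    obtain ⟨hz₁, hz₂⟩ := Prod.ext_iff.mp hz
    obtain ⟨⟨h₁, hq₁⟩, h₂, hq₂⟩ := by simpa only [I, mem_product] using hxI
    have hq₁' := (mem_filter.mp hq₁).1
    have hq₂' := (mem_filter.mp hq₂).1
    exact mem_filter.mpr ⟨hxI, sameFrac_of_frac_eq hsmall h₁.1 h₂.1 hq₁' hq₂' hz₁,
      sameFrac_of_frac_eq hsmall h₁.2 h₂.2 hq₁' hq₂' hz₂⟩
  have hmoment := sum_norm_corrSum_pow_le hχ (residues p H) (r + 1)
  rw [ZMod.card] at hmoment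
  calc _ = (∑ i ∈ I, ‖corrSum χ (residues p H) (z i).1 (z i).2‖) ^ (2 * (r + 1)) := by
        rw [fracCorrSum, sum_product, sum_product]
    _ ≤ (#I : ℝ) ^ (2 * r) * (#{x ∈ I ×ˢ I | z x.1 = z x.2} *
          ∑ y : ZMod p × ZMod p, ‖corrSum χ (residues p H) y.1 y.2‖ ^ (2 * (r + 1))) :=
        sum_comp_pow_le_energy_mul I z
          (f := fun y => ‖corrSum χ (residues p H) y.1 y.2‖) (fun _ => norm_nonneg _) r
    _ ≤ _ := by
        rw [Fintype.sum_prod_type]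
        have hT := card_residues_le p H
        gcongr
        refine hmoment.trans ?_
        gcongr

end Amplification

section Numerics

lemma half_le_natFloor {x : ℝ} (hx : 1 ≤ x) : x / 2 ≤ ⌊x⌋₊ := by
  have hlt := Nat.lt_floor_add_one x
  have hone : (1 : ℝ) ≤ ⌊x⌋₊ := by exact_mod_cast Nat.floor_pos.mpr hx
  linarith

lemma sum_div_add_one_le (K M : ℕ) :
    ((∑ m ∈ Icc 1 M, (K / m + 1) : ℕ) : ℝ) ≤ (K + M) * (1 + Real.log M) := by
  have hharmonic : ∑ m ∈ Icc 1 M, (m : ℝ)⁻¹ ≤ 1 + Real.log M := by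
    have := harmonic_le_one_add_log M
    rw [harmonic_eq_sum_Icc] at this
    push_cast at this
    exact this
  have hlog := Real.log_natCast_nonneg M
  calc _ ≤ ∑ m ∈ Icc 1 M, (K * (m : ℝ)⁻¹ + 1) := by
        push_cast
        gcongr
        exact Nat.cast_div_le.trans_eq (div_eq_mul_inv _ _)
    _ = K * ∑ m ∈ Icc 1 M, (m : ℝ)⁻¹ + M := by
        rw [sum_add_distrib, mul_sum]
        simp
    _ ≤ K * (1 + Real.log M) + M * (1 + Real.log M) := by
        gcongr
        exact le_mul_of_one_le_right (by positivity) (by linarith)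
    _ = _ := (add_mul _ _ _).symm

lemma one_add_log_sq_le {x η : ℝ} (hx : 1 ≤ x) (hη : 0 < η) :
    (1 + Real.log x) ^ 2 ≤ (1 + 4 / η) ^ 2 * x ^ (η / 2) := by
  have hx₀ : 0 < x := by linarith
  have hlog : 1 + Real.log x ≤ (1 + 4 / η) * x ^ (η / 4) := by
    have hle := Real.log_le_rpow_div hx₀.le (show 0 < η / 4 by linarith)
    have hone : 1 ≤ x ^ (η / 4) := Real.one_le_rpow hx (by linarith)
    calc 1 + Real.log x ≤ x ^ (η / 4) + x ^ (η / 4) / (η / 4) := add_le_add hone hle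
      _ = _ := by field_simp
  calc _ ≤ ((1 + 4 / η) * x ^ (η / 4)) ^ 2 := by
        have := Real.log_nonneg hx
        gcongr
    _ = (1 + 4 / η) ^ 2 * x ^ (η / 2) := by
        rw [mul_pow, ← Real.rpow_mul_natCast hx₀.le]
        ring_nf

lemma le_mul_of_pow_le_energy_mul_moment {X c H E S G μ x η : ℝ} {r : ℕ} (hx : 0 < x)
    (hc : 0 ≤ c) (hH : 0 ≤ H) (hS : 0 ≤ S) (hG : 1 ≤ G) (hμ : 1 ≤ μ)
    (hX : X ^ (2 * (r + 1)) ≤ c ^ (2 * r) * (E * S)) (hE : E ≤ G * x ^ (-1 - 2 * η) * c ^ 2)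
    (hSle : S ≤ μ * x * H ^ (2 * (r + 1))) :
    X ≤ G * μ * x ^ (-(η / (r + 1))) * (c * H) := by
  have hroot : (x ^ (-(η / (r + 1)))) ^ (2 * (r + 1)) = x ^ (-1 - 2 * η) * x := by
    rw [← Real.rpow_mul_natCast hx.le, ← Real.rpow_add_one hx.ne']
    congr 1
    push_cast
    field_simp
    ring
  refine le_of_pow_le_pow_left₀ (n := 2 * (r + 1)) (by lia) (by positivity) ?_
  calc _ ≤ _ := hX
    _ ≤ c ^ (2 * r) * (G * x ^ (-1 - 2 * η) * c ^ 2 * (μ * x * H ^ (2 * (r + 1)))) := by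
        gcongr
    _ = G * μ * (x ^ (-1 - 2 * η) * x * (c * H) ^ (2 * (r + 1))) := by ring
    _ ≤ (G * μ) ^ (2 * (r + 1)) * (x ^ (-1 - 2 * η) * x * (c * H) ^ (2 * (r + 1))) := by
        gcongr
        exact le_self_pow₀ (one_le_mul_of_one_le_of_one_le hG hμ) (by lia)
    _ = _ := by
        rw [← hroot]
        ring

lemma one_le_mul_rpow_neg_mul {c s T : ℝ} (hx : 0 < x) (h : x ^ s ≤ c * T) :
    1 ≤ c * x ^ (-s) * T := by
  calc 1 = x ^ (-s) * x ^ s := by rw [← Real.rpow_add hx, neg_add_cancel, Real.rpow_zero]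
    _ ≤ x ^ (-s) * (c * T) := by gcongr
    _ = _ := by ring

lemma moment_le {x H : ℝ} {n : ℕ} (hx : 0 ≤ x) (hH : 0 ≤ H) (hxH : x ≤ (2 * H) ^ n) :
    (n : ℝ) ^ (2 * n) * H ^ n * x ^ 2 + (2 * n) ^ 2 * x * H ^ (2 * n) ≤
      ((n : ℝ) ^ (2 * n) * 2 ^ n + (2 * n) ^ 2) * x * H ^ (2 * n) := by
  calc _ = (n : ℝ) ^ (2 * n) * H ^ n * x * x + (2 * n) ^ 2 * x * H ^ (2 * n) := by ring
    _ ≤ (n : ℝ) ^ (2 * n) * H ^ n * x * (2 * H) ^ n + (2 * n) ^ 2 * x * H ^ (2 * n) := by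
        gcongr
    _ = _ := by ring

end Numerics

/-- The ranges, in terms of a real `x` (later the prime `p`) and of `η`, of the lengths `K`, `M`,
`N` of the trilinear sum and of the lengths `A`, `B`, `H` of the shifts by `(a * t, b * t)` with
`a ≤ A`, `b ≤ B`, `t ≤ H`. The factors `2` and `4` absorb the rounding of the lengths. -/
structure ShiftRange (x η : ℝ) (K M N A B H : ℕ) : Prop where
  one_le_x : 1 ≤ x
  eta_pos : 0 < η
  eta_lt : η < 1 / 40
  four_lt : 4 < x ^ (5 * η)
  le_K : x ^ (1 / 5 + η) ≤ 2 * K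
  K_le : K ≤ x ^ (1 / 4 - η)
  le_M : x ^ (1 / 5 + η) ≤ 2 * M
  M_le : M ≤ x ^ (1 / 4 - η)
  le_N : x ^ (1 / 5 + η) ≤ 2 * N
  N_le : N ≤ x ^ (1 / 4 - η)
  le_A : x ^ (1 / 5 : ℝ) ≤ 4 * A
  A_le : A ≤ K * x ^ (-η)
  le_B : x ^ (1 / 5 : ℝ) ≤ 4 * B
  B_le : B ≤ N * x ^ (-η)
  le_H : x ^ (η / 2) ≤ 2 * H
  H_le : H ≤ x ^ (η / 2)

lemma exists_shiftRange {x η : ℝ} (hx : 1 ≤ x) (hη : 0 < η) (hη' : η < 1 / 40)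
    (hlarge : 4 < x ^ (5 * η)) {K M N : ℝ}
    (hK : x ^ (1 / 5 + η) ≤ K) (hK' : K < x ^ (1 / 4 - η)) (hM : x ^ (1 / 5 + η) ≤ M)
    (hM' : M < x ^ (1 / 4 - η)) (hN : x ^ (1 / 5 + η) ≤ N) (hN' : N < x ^ (1 / 4 - η)) :
    ∃ A B H, ShiftRange x η ⌊K⌋₊ ⌊M⌋₊ ⌊N⌋₊ A B H := by
  have hx₀ : 0 < x := by linarith
  have hone : 1 ≤ x ^ (1 / 5 + η) := Real.one_le_rpow hx (by linarith)
  have hfloor {T : ℝ} (hT : x ^ (1 / 5 + η) ≤ T) : x ^ (1 / 5 + η) ≤ 2 * ⌊T⌋₊ := by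
    linarith [half_le_natFloor (hone.trans hT)]
  have hfloor' {T : ℝ} (hT : x ^ (1 / 5 + η) ≤ T) (hT' : T < x ^ (1 / 4 - η)) :
      ⌊T⌋₊ ≤ x ^ (1 / 4 - η) := (Nat.floor_le (by linarith)).trans hT'.le
  have hshift {T : ℕ} (hT : x ^ (1 / 5 + η) ≤ 2 * T) :
      x ^ (1 / 5 : ℝ) ≤ 4 * ⌊T * x ^ (-η)⌋₊ := by
    have hscale : x ^ (1 / 5 : ℝ) ≤ 2 * (T * x ^ (-η)) := by
      calc x ^ (1 / 5 : ℝ) = x ^ (1 / 5 + η) * x ^ (-η) := by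
            rw [← Real.rpow_add hx₀, add_neg_cancel_right]
        _ ≤ 2 * T * x ^ (-η) := by gcongr
        _ = _ := mul_assoc _ _ _
    have hfour : x ^ (5 * η) ≤ x ^ (1 / 5 : ℝ) :=
      Real.rpow_le_rpow_of_exponent_le hx (by linarith)
    linarith [half_le_natFloor (x := T * x ^ (-η)) (by linarith)]
  refine ⟨⌊⌊K⌋₊ * x ^ (-η)⌋₊, ⌊⌊N⌋₊ * x ^ (-η)⌋₊, ⌊x ^ (η / 2)⌋₊, hx, hη, hη', hlarge,
    hfloor hK, hfloor' hK hK', hfloor hM, hfloor' hM hM', hfloor hN, hfloor' hN hN',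
    hshift (hfloor hK), Nat.floor_le (by positivity), hshift (hfloor hN),
    Nat.floor_le (by positivity), ?_, Nat.floor_le (by positivity)⟩
  linarith [half_le_natFloor (Real.one_le_rpow hx (show 0 ≤ η / 2 by linarith))]

namespace ShiftRange

variable {x η : ℝ} {K M N A B D H : ℕ}

lemma x_pos (h : ShiftRange x η K M N A B H) : 0 < x := by linarith [h.one_le_x]

lemma rpow_le_rpow (h : ShiftRange x η K M N A B H) {s t : ℝ} (hst : s ≤ t) : x ^ s ≤ x ^ t :=
  Real.rpow_le_rpow_of_exponent_le h.one_le_x hst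

lemma mul_lt (h : ShiftRange x η K M N A B H) : (K + M * N) * (A + M * B) < x := by
  have hx := h.x_pos
  have hη := h.eta_pos
  have hη' := h.eta_lt
  have hfst : (K + M * N : ℝ) ≤ 2 * x ^ (1 / 2 - 2 * η) := by
    calc (K + M * N : ℝ) ≤ x ^ (1 / 4 - η) + x ^ (1 / 4 - η) * x ^ (1 / 4 - η) := by
          gcongr
          exacts [h.K_le, h.M_le, h.N_le]
      _ ≤ x ^ (1 / 2 - 2 * η) + x ^ (1 / 2 - 2 * η) := by
          rw [← Real.rpow_add hx]
          exact add_le_add (h.rpow_le_rpow (by linarith)) (h.rpow_le_rpow (by linarith))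
      _ = _ := (two_mul _).symm
  have hshift {T S : ℝ} (hT : T ≤ S * x ^ (-η)) (hS : S ≤ x ^ (1 / 4 - η)) :
      T ≤ x ^ (1 / 4 - 2 * η) := by
    calc T ≤ x ^ (1 / 4 - η) * x ^ (-η) := hT.trans (by gcongr)
      _ = _ := by rw [← Real.rpow_add hx]; ring_nf
  have hsnd : (A + M * B : ℝ) ≤ 2 * x ^ (1 / 2 - 3 * η) := by
    calc (A + M * B : ℝ) ≤ x ^ (1 / 4 - 2 * η) + x ^ (1 / 4 - η) * x ^ (1 / 4 - 2 * η) := by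
          gcongr
          exacts [hshift h.A_le h.K_le, h.M_le, hshift h.B_le h.N_le]
      _ ≤ x ^ (1 / 2 - 3 * η) + x ^ (1 / 2 - 3 * η) := by
          rw [← Real.rpow_add hx]
          exact add_le_add (h.rpow_le_rpow (by linarith)) (h.rpow_le_rpow (by linarith))
      _ = _ := (two_mul _).symm
  calc ((K + M * N) * (A + M * B) : ℝ)
      ≤ 2 * x ^ (1 / 2 - 2 * η) * (2 * x ^ (1 / 2 - 3 * η)) := by gcongr
    _ = 4 * x ^ (1 - 5 * η) := by
        rw [show 1 - 5 * η = 1 / 2 - 2 * η + (1 / 2 - 3 * η) by ring, Real.rpow_add hx]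
        ring
    _ < x ^ (5 * η) * x ^ (1 - 5 * η) := by
        gcongr
        exact h.four_lt
    _ = x := by rw [← Real.rpow_add hx, add_sub_cancel, Real.rpow_one]

lemma H_lt (h : ShiftRange x η K M N A B H) : H < x := by
  have hη := h.eta_pos
  have hη' := h.eta_lt
  have hx : 1 < x := h.one_le_x.lt_of_ne fun hx => by
    have := h.four_lt
    rw [← hx, Real.one_rpow] at this
    linarith
  calc (H : ℝ) ≤ x ^ (η / 2) := h.H_le
    _ < x ^ (1 : ℝ) := Real.rpow_lt_rpow_of_exponent_lt hx (by linarith)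
    _ = x := Real.rpow_one x

lemma M_pos (h : ShiftRange x η K M N A B H) : 0 < M := by
  have : (0 : ℝ) < 2 * M := (Real.rpow_pos_of_pos h.x_pos _).trans_le h.le_M
  exact_mod_cast pos_of_mul_pos_right this zero_le_two

lemma M_le_x (h : ShiftRange x η K M N A B H) : M ≤ x := by
  calc (M : ℝ) ≤ x ^ (1 / 4 - η) := h.M_le
    _ ≤ x ^ (1 : ℝ) := h.rpow_le_rpow (by linarith [h.eta_pos])
    _ = x := Real.rpow_one x

lemma K_add_M_le (h : ShiftRange x η K M N A B H) :
    (K + M : ℝ) ≤ 4 * x ^ (-(1 / 5 + η)) * (K * M) := by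
  calc (K + M : ℝ) ≤ K * (2 * x ^ (-(1 / 5 + η)) * M) + M * (2 * x ^ (-(1 / 5 + η)) * K) :=
        add_le_add
          (le_mul_of_one_le_right (by positivity) (one_le_mul_rpow_neg_mul h.x_pos h.le_M))
          (le_mul_of_one_le_right (by positivity) (one_le_mul_rpow_neg_mul h.x_pos h.le_K))
    _ = _ := by ring

lemma A_add_M_le (h : ShiftRange x η K M N A B H) :
    (A + M : ℝ) ≤ 6 * x ^ (-(1 / 5 : ℝ)) * (A * M) := by
  have hx := h.x_pos
  calc (A + M : ℝ) ≤ A * (2 * x ^ (-(1 / 5 + η)) * M) + M * (4 * x ^ (-(1 / 5 : ℝ)) * A) :=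
        add_le_add
          (le_mul_of_one_le_right (by positivity) (one_le_mul_rpow_neg_mul hx h.le_M))
          (le_mul_of_one_le_right (by positivity) (one_le_mul_rpow_neg_mul hx h.le_A))
    _ ≤ A * (2 * x ^ (-(1 / 5 : ℝ)) * M) + M * (4 * x ^ (-(1 / 5 : ℝ)) * A) := by
        gcongr
        exacts [h.one_le_x, by linarith [h.eta_pos]]
    _ = _ := by ring

lemma one_le_M_mul_N_mul_B (h : ShiftRange x η K M N A B H) :
    1 ≤ 16 * ((x ^ (-(1 / 5 + η))) ^ 2 * x ^ (-(1 / 5 : ℝ))) * (M * N * B) := by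
  have hx := h.x_pos
  calc (1 : ℝ) ≤ 2 * x ^ (-(1 / 5 + η)) * M * (2 * x ^ (-(1 / 5 + η)) * N) *
          (4 * x ^ (-(1 / 5 : ℝ)) * B) :=
        one_le_mul_of_one_le_of_one_le
          (one_le_mul_of_one_le_of_one_le (one_le_mul_rpow_neg_mul hx h.le_M)
            (one_le_mul_rpow_neg_mul hx h.le_N))
          (one_le_mul_rpow_neg_mul hx h.le_B)
    _ = _ := by ring

lemma sum_mul_sum_le (h : ShiftRange x η K M N A B H) :
    (((∑ m ∈ Icc 1 M, (K / m + 1)) * ∑ m ∈ Icc 1 M, (A / m + 1) : ℕ) : ℝ) ≤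
      (K + M) * (A + M) * (1 + Real.log x) ^ 2 := by
  have hlog : Real.log M ≤ Real.log x :=
    Real.log_le_log (by exact_mod_cast h.M_pos) h.M_le_x
  have hlog' := Real.log_natCast_nonneg M
  have hlogx := hlog'.trans hlog
  calc _ ≤ (K + M) * (1 + Real.log M) * ((A + M) * (1 + Real.log M)) := by
        push_cast
        gcongr
        exacts [mod_cast sum_div_add_one_le K M, mod_cast sum_div_add_one_le A M]
    _ ≤ (K + M) * (1 + Real.log x) * ((A + M) * (1 + Real.log x)) := by gcongr
    _ = _ := by ring

lemma energy_le_mul_log_sq (h : ShiftRange x η K M N A B H) :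
    ((2 * M * (D * (K * N * (A * B)) *
        ((∑ m ∈ Icc 1 M, (K / m + 1)) * ∑ m ∈ Icc 1 M, (A / m + 1))) : ℕ) : ℝ) ≤
      768 * D * (1 + Real.log x) ^ 2 * x ^ (-1 - 3 * η) *
        ((M * M * (K * N * (A * B)) : ℕ) : ℝ) ^ 2 := by
  have hx := h.x_pos
  have hlog := Real.log_nonneg h.one_le_x
  set u := x ^ (-(1 / 5 + η)) with hu
  set v := x ^ (-(1 / 5 : ℝ)) with hv
  set L := 1 + Real.log x
  have huv : u ^ 3 * v ^ 2 = x ^ (-1 - 3 * η) := by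
    rw [hu, hv, ← Real.rpow_mul_natCast hx.le, ← Real.rpow_mul_natCast hx.le, ← Real.rpow_add hx]
    ring_nf
  calc _ = 2 * M * (D * (K * N * (A * B)) *
          (((∑ m ∈ Icc 1 M, (K / m + 1)) * ∑ m ∈ Icc 1 M, (A / m + 1) : ℕ) : ℝ)) := by
        push_cast
        ring
    _ ≤ 2 * M * (D * (K * N * (A * B)) * ((4 * u * (K * M)) * (6 * v * (A * M)) * L ^ 2)) := by
        grw [h.sum_mul_sum_le, h.K_add_M_le, h.A_add_M_le]
    _ ≤ 2 * M * (D * (K * N * (A * B)) * ((4 * u * (K * M)) * (6 * v * (A * M)) * L ^ 2)) *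
          (16 * (u ^ 2 * v) * (M * N * B)) :=
        le_mul_of_one_le_right (by positivity) h.one_le_M_mul_N_mul_B
    _ = 768 * D * L ^ 2 * (u ^ 3 * v ^ 2) * (M * M * (K * N * (A * B))) ^ 2 := by ring
    _ = _ := by
        rw [huv]
        push_cast
        rfl

lemma energy_le (h : ShiftRange x η K M N A B H) {C : ℝ} (hC : 0 ≤ C)
    (hD : D ≤ C * x ^ (η / 2)) :
    ((2 * M * (D * (K * N * (A * B)) *
        ((∑ m ∈ Icc 1 M, (K / m + 1)) * ∑ m ∈ Icc 1 M, (A / m + 1))) : ℕ) : ℝ) ≤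
      768 * C * (1 + 4 / η) ^ 2 * x ^ (-1 - 2 * η) *
        ((M * M * (K * N * (A * B)) : ℕ) : ℝ) ^ 2 := by
  have hx := h.x_pos
  refine h.energy_le_mul_log_sq.trans ?_
  gcongr ?_ * _
  calc 768 * D * (1 + Real.log x) ^ 2 * x ^ (-1 - 3 * η)
      ≤ 768 * (C * x ^ (η / 2)) * ((1 + 4 / η) ^ 2 * x ^ (η / 2)) * x ^ (-1 - 3 * η) := by
        gcongr
        exact one_add_log_sq_le h.one_le_x h.eta_pos
    _ = 768 * C * (1 + 4 / η) ^ 2 * (x ^ (η / 2) * x ^ (η / 2) * x ^ (-1 - 3 * η)) := by ring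
    _ = _ := by
        rw [← Real.rpow_add hx, ← Real.rpow_add hx]
        ring_nf

lemma le_two_mul_H_pow (h : ShiftRange x η K M N A B H) {n : ℕ} (hn : 2 ≤ η * n) :
    x ≤ (2 * H) ^ n := by
  calc x = x ^ (1 : ℝ) := (Real.rpow_one x).symm
    _ ≤ x ^ (η / 2 * n) := h.rpow_le_rpow (by linarith)
    _ = (x ^ (η / 2)) ^ n := Real.rpow_mul_natCast h.x_pos.le _ _
    _ ≤ (2 * H) ^ n := by
        have := h.x_pos
        gcongr
        exact h.le_H

lemma divisors_term_le (h : ShiftRange x η K M N A B H) {C : ℝ} (hC : 0 ≤ C)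
    (hD : D ≤ C * x ^ (η / 2)) :
    (H * (D * (K * B)) : ℝ) ≤ 8 * C * x ^ (-(η / 2)) * (H * (K * N * A * B)) := by
  have hx := h.x_pos
  have hη := h.eta_lt
  have hη' := h.eta_pos
  have hA : x ^ (η / 2) ≤ 4 * x ^ (-(η / 2)) * A := by
    calc x ^ (η / 2) ≤ x ^ (-(η / 2)) * x ^ (1 / 5 : ℝ) := by
          rw [← Real.rpow_add hx]
          exact h.rpow_le_rpow (by linarith)
      _ ≤ x ^ (-(η / 2)) * (4 * A) := by
          gcongr
          exact h.le_A
      _ = _ := by ring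
  have hN : (1 : ℝ) ≤ 2 * N := (Real.one_le_rpow h.one_le_x (by linarith)).trans h.le_N
  calc (H * (D * (K * B)) : ℝ) ≤ H * (C * (4 * x ^ (-(η / 2)) * A) * (K * B)) := by
        grw [hD, hA]
    _ ≤ H * (C * (4 * x ^ (-(η / 2)) * A) * (K * B)) * (2 * N) :=
        le_mul_of_one_le_right (by positivity) hN
    _ = _ := by ring

lemma boundary_term_le (h : ShiftRange x η K M N A B H) :
    (2 * H * (A * N + B * K) : ℝ) ≤ 4 * x ^ (-(η / 2)) * (K * N) := by
  have hx := h.x_pos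
  calc (2 * H * (A * N + B * K) : ℝ)
      ≤ 2 * x ^ (η / 2) * (K * x ^ (-η) * N + N * x ^ (-η) * K) := by
        grw [h.H_le, h.A_le, h.B_le]
    _ = 4 * (x ^ (η / 2) * x ^ (-η)) * (K * N) := by ring
    _ = _ := by
        rw [← Real.rpow_add hx]
        ring_nf

lemma A_mul_B_mul_H_pos (h : ShiftRange x η K M N A B H) : (0 : ℝ) < A * B * H := by
  have hpos {s c T : ℝ} (hc : 0 < c) (hT : x ^ s ≤ c * T) : 0 < T :=
    pos_of_mul_pos_right ((Real.rpow_pos_of_pos h.x_pos s).trans_le hT) hc.le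
  exact mul_pos (mul_pos (hpos four_pos h.le_A) (hpos four_pos h.le_B)) (hpos two_pos h.le_H)

end ShiftRange

section Assembly

variable {p K M N A B D H r : ℕ} [Fact p.Prime] {χ : MulChar (ZMod p) ℂ} {η C : ℝ}

lemma fracCorrSum_le (hχ : χ ≠ 1) (h : ShiftRange p η K M N A B H) (hC : 1 ≤ C)
    (hDC : D ≤ C * (p : ℝ) ^ (η / 2))
    (hD : ∀ W ≤ (K + M * N) * (A + M * B), #W.divisors ≤ D) (hr : 2 ≤ η * r) :
    fracCorrSum χ K M N A B H ≤
      768 * C * (1 + 4 / η) ^ 2 *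
        (((r + 1 : ℕ) : ℝ) ^ (2 * (r + 1)) * 2 ^ (r + 1) + (2 * (r + 1 : ℕ)) ^ 2) *
        (p : ℝ) ^ (-(η / (r + 1))) * ((M * M * (K * N * (A * B)) : ℕ) * H) := by
  have hη := h.eta_pos
  have hHr : (p : ℝ) ≤ (2 * H) ^ (r + 1) := h.le_two_mul_H_pow (by push_cast; linarith)
  have hn : (1 : ℝ) ≤ (r + 1 : ℕ) := by exact_mod_cast Nat.le_add_left 1 r
  have hG : 1 ≤ 768 * C * (1 + 4 / η) ^ 2 :=
    one_le_mul_of_one_le_of_one_le (by linarith)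
      (one_le_pow₀ (le_add_of_nonneg_right (by positivity)))
  have hμ : 1 ≤ ((r + 1 : ℕ) : ℝ) ^ (2 * (r + 1)) * 2 ^ (r + 1) + (2 * (r + 1 : ℕ)) ^ 2 :=
    le_add_of_nonneg_of_le (by positivity) (one_le_pow₀ (by linarith))
  exact le_mul_of_pow_le_energy_mul_moment h.x_pos (by positivity) (by positivity)
    (by positivity) hG hμ (fracCorrSum_pow_le hχ (mod_cast h.mul_lt) hD r)
    (h.energy_le (by linarith) hDC) (moment_le (by positivity) (by positivity) hHr)

lemma sq_norm_sum_le (hχ : χ ≠ 1) (h : ShiftRange p η K M N A B H)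
    (hC : 1 ≤ C) (hDC : D ≤ C * (p : ℝ) ^ (η / 2))
    (hD : ∀ W ≤ (K + M * N) * (A + M * B), #W.divisors ≤ D) (hr : 2 ≤ η * r)
    {α : ℕ → ℂ} {β : ℕ × ℕ → ℂ} (hα : ∀ m, ‖α m‖ ≤ 1) (hβ : ∀ y, ‖β y‖ ≤ 1) :
    ‖∑ y ∈ pairBox K N, β y * ∑ m ∈ Icc 1 M, α m * χ (affineEval m y)‖ ^ 2 ≤
      (768 * C * (1 + 4 / η) ^ 2 *
        (((r + 1 : ℕ) : ℝ) ^ (2 * (r + 1)) * 2 ^ (r + 1) + (2 * (r + 1 : ℕ)) ^ 2) + 8 * C + 4) *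
        (p : ℝ) ^ (-(η / (r + 1))) * (K * M * N) ^ 2 := by
  have hη := h.eta_pos
  have hfrac := fracCorrSum_le hχ h hC hDC hD hr
  set G := 768 * C * (1 + 4 / η) ^ 2 *
    (((r + 1 : ℕ) : ℝ) ^ (2 * (r + 1)) * 2 ^ (r + 1) + (2 * (r + 1 : ℕ)) ^ 2)
  set w := (p : ℝ) ^ (-(η / (r + 1)))
  have hw : (p : ℝ) ^ (-(η / 2)) ≤ w := by
    have hr₀ : r ≠ 0 := by
      rintro rfl
      norm_num at hr
    have hr₁ : (1 : ℝ) ≤ r := by exact_mod_cast Nat.one_le_iff_ne_zero.mpr hr₀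
    exact h.rpow_le_rpow (neg_le_neg (by gcongr; linarith))
  have hmain := mul_sq_norm_sum_le χ (mod_cast h.H_lt) (mod_cast h.mul_lt) hD hα hβ
  refine le_of_mul_le_mul_left (hmain.trans ?_) h.A_mul_B_mul_H_pos
  have hdiv := h.divisors_term_le (by linarith) hDC
  have hbdry := h.boundary_term_le
  calc _ ≤ (K * N : ℝ) * (G * w * ((M * M * (K * N * (A * B)) : ℕ) * H) +
          M * M * (8 * C * w * (H * (K * N * A * B)) + A * B * H * (4 * w * (K * N)))) := by
        grw [hfrac, hdiv, hbdry, hw]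
    _ = _ := by
        push_cast
        ring

end Assembly

lemma card_divisors_le_floor {C η : ℝ} {p W : ℕ} (hη : 0 ≤ η) (hC : 0 ≤ C)
    (hdiv : ∀ n : ℕ, n ≠ 0 → (#n.divisors : ℝ) ≤ C * (n : ℝ) ^ η) (hW : W ≤ p) :
    #W.divisors ≤ ⌊C * (p : ℝ) ^ η⌋₊ := by
  rcases eq_or_ne W 0 with rfl | hW₀
  · simp
  · refine Nat.le_floor ((hdiv W hW₀).trans ?_)
    gcongr

section Trilinear

variable {p : ℕ} [Fact p.Prime] (χ : MulChar (ZMod p) ℂ) {α : ℕ → ℂ} {β : ℕ → ℕ → ℂ}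

lemma trilinear_sum_eq_sum_pairBox (α : ℕ → ℂ) (β : ℕ → ℕ → ℂ) (K M N : ℕ) :
    ∑ k ∈ Icc 1 K, ∑ m ∈ Icc 1 M, ∑ n ∈ Icc 1 N, α m * β k n * χ (k + m * n : ℕ) =
      ∑ y ∈ pairBox K N, β y.1 y.2 * ∑ m ∈ Icc 1 M, α m * χ (affineEval m y) := by
  rw [pairBox, sum_product]
  refine sum_congr rfl fun k _ => ?_
  rw [sum_comm]
  refine sum_congr rfl fun n _ => ?_
  rw [mul_sum]
  exact sum_congr rfl fun m _ => by rw [affineEval]; ring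

lemma norm_trilinear_sum_le (hα : ∀ m, ‖α m‖ ≤ 1) (hβ : ∀ k n, ‖β k n‖ ≤ 1) (K M N : ℕ) :
    ‖∑ k ∈ Icc 1 K, ∑ m ∈ Icc 1 M, ∑ n ∈ Icc 1 N, α m * β k n * χ (k + m * n : ℕ)‖ ≤
      K * M * N := by
  have hterm (k m n : ℕ) : ‖α m * β k n * χ (k + m * n : ℕ)‖ ≤ 1 := by
    rw [norm_mul, norm_mul]
    exact mul_le_one₀ (mul_le_one₀ (hα m) (norm_nonneg _) (hβ k n)) (norm_nonneg _)
      (norm_mulChar_apply_le_one χ _)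
  calc _ ≤ ∑ k ∈ Icc 1 K, ∑ m ∈ Icc 1 M, ∑ _n ∈ Icc 1 N, (1 : ℝ) :=
        norm_sum_le_of_le _ fun k _ => norm_sum_le_of_le _ fun m _ =>
          norm_sum_le_of_le _ fun n _ => hterm k m n
    _ = _ := by simp [mul_assoc]

end Trilinear

lemma exists_norm_trilinear_sum_le_of_shiftRange {η : ℝ} (hη : 0 < η) :
    ∃ κ : ℝ, 0 < κ ∧ κ ≤ η ∧ ∃ C : ℝ, 0 < C ∧ ∀ (p : ℕ) [Fact p.Prime] (K M N A B H : ℕ),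
      ShiftRange p η K M N A B H → ∀ χ : MulChar (ZMod p) ℂ, χ ≠ 1 →
      ∀ (α : ℕ → ℂ) (β : ℕ → ℕ → ℂ), (∀ m, ‖α m‖ ≤ 1) → (∀ k n, ‖β k n‖ ≤ 1) →
      ‖∑ k ∈ Icc 1 K, ∑ m ∈ Icc 1 M, ∑ n ∈ Icc 1 N, α m * β k n * χ (k + m * n : ℕ)‖ ≤
        C * (K * M * N) * (p : ℝ) ^ (-κ) := by
  obtain ⟨C, hC, hdiv⟩ := exists_card_divisors_le_mul_rpow (half_pos hη)
  set r := ⌈2 / η⌉₊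
  have hr : 2 ≤ η * r := (div_le_iff₀' hη).mp (Nat.le_ceil _)
  set G := 768 * C * (1 + 4 / η) ^ 2 *
    (((r + 1 : ℕ) : ℝ) ^ (2 * (r + 1)) * 2 ^ (r + 1) + (2 * (r + 1 : ℕ)) ^ 2) + 8 * C + 4 with hG
  have hG₀ : 0 < G := by positivity
  refine ⟨η / (2 * (r + 1)), by positivity, div_le_self hη.le ?_, √G, by positivity, ?_⟩
  · have : (0 : ℝ) ≤ r := r.cast_nonneg
    linarith
  intro p _ K M N A B H h χ hχ α β hα hβ
  rw [trilinear_sum_eq_sum_pairBox]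
  have hsmall : (K + M * N) * (A + M * B) < p := by exact_mod_cast h.mul_lt
  have hsq := sq_norm_sum_le hχ h hC (Nat.floor_le (by positivity))
    (fun W hW => card_divisors_le_floor (by positivity) (by positivity) hdiv
      (hW.trans hsmall.le)) hr hα (β := fun y => β y.1 y.2) (fun y => hβ y.1 y.2)
  have hroot : (p : ℝ) ^ (-(η / (r + 1))) = ((p : ℝ) ^ (-(η / (2 * (r + 1))))) ^ 2 := by
    rw [← Real.rpow_mul_natCast h.x_pos.le]
    congr 1
    push_cast
    field_simp
  rw [← hG, hroot, ← Real.sq_sqrt hG₀.le] at hsq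
  refine le_of_pow_le_pow_left₀ two_ne_zero (by positivity) (hsq.trans_eq ?_)
  ring

theorem trilinear_rational_additive_general (η : ℝ) (hη : 0 < η) :
    ∃ κ : ℝ, 0 < κ ∧ ∃ C : ℝ, 0 < C ∧ ∀ (p : ℕ), p.Prime →
      ∀ (χ : MulChar (ZMod p) ℂ), χ ≠ 1 →
      ∀ (α : ℕ → ℂ) (β : ℕ → ℕ → ℂ), (∀ m, ‖α m‖ ≤ 1) → (∀ k n, ‖β k n‖ ≤ 1) →
      ∀ (K M N : ℝ),
        (p : ℝ) ^ ((1 : ℝ) / 5 + η) ≤ K → K < (p : ℝ) ^ ((1 : ℝ) / 4 - η) →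
        (p : ℝ) ^ ((1 : ℝ) / 5 + η) ≤ M → M < (p : ℝ) ^ ((1 : ℝ) / 4 - η) →
        (p : ℝ) ^ ((1 : ℝ) / 5 + η) ≤ N → N < (p : ℝ) ^ ((1 : ℝ) / 4 - η) →
      ‖∑ k ∈ Icc 1 ⌊K⌋₊, ∑ m ∈ Icc 1 ⌊M⌋₊, ∑ n ∈ Icc 1 ⌊N⌋₊,
          α m * β k n * χ ((k + m * n : ℕ) : ZMod p)‖ ≤ C * (K * M * N) * (p : ℝ) ^ (-κ) := by
  obtain ⟨κ, hκ, hκη, C, hC, hbound⟩ := exists_norm_trilinear_sum_le_of_shiftRange hη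
  refine ⟨κ, hκ, C + 4, by positivity, ?_⟩
  intro p hp χ hχ α β hα hβ K M N hK hK' hM hM' hN hN'
  have : Fact p.Prime := ⟨hp⟩
  have hp₁ : (1 : ℝ) ≤ p := by exact_mod_cast hp.one_le
  have hη' : η < 1 / 40 := by
    have := (Real.rpow_lt_rpow_left_iff (by exact_mod_cast hp.one_lt)).mp (hK.trans_lt hK')
    linarith
  have hK₀ : 0 ≤ K := le_trans (by positivity) hK
  have hM₀ : 0 ≤ M := le_trans (by positivity) hM
  have hN₀ : 0 ≤ N := le_trans (by positivity) hN
  rcases lt_or_ge 4 ((p : ℝ) ^ (5 * η)) with hlarge | hsmall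
  · obtain ⟨A, B, H, h⟩ := exists_shiftRange hp₁ hη hη' hlarge hK hK' hM hM' hN hN'
    refine (hbound p _ _ _ A B H h χ hχ α β hα hβ).trans ?_
    gcongr
    exacts [by linarith, Nat.floor_le hK₀, Nat.floor_le hM₀, Nat.floor_le hN₀]
  · have hpow : (p : ℝ) ^ κ ≤ 4 :=
      (Real.rpow_le_rpow_of_exponent_le hp₁ (by linarith)).trans hsmall
    calc _ ≤ (⌊K⌋₊ * ⌊M⌋₊ * ⌊N⌋₊ : ℝ) := norm_trilinear_sum_le χ hα hβ _ _ _
      _ ≤ K * M * N := by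
          gcongr
          exacts [Nat.floor_le hK₀, Nat.floor_le hM₀, Nat.floor_le hN₀]
      _ = (p : ℝ) ^ κ * (K * M * N) * (p : ℝ) ^ (-κ) := by
          rw [mul_right_comm ((p : ℝ) ^ κ), ← Real.rpow_add (by linarith), add_neg_cancel,
            Real.rpow_zero, one_mul]
      _ ≤ (C + 4) * (K * M * N) * (p : ℝ) ^ (-κ) := by
          gcongr
          linarith

lemma norm_ite_addChar_le_one {G : Type*} [AddGroup G] [Finite G] (ψ : AddChar G ℂ)
    (a : Prop) [Decidable a] (x : G) : ‖if a then ψ x else 0‖ ≤ 1 := by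
  split_ifs <;> simp

lemma ite_and_mul_addChar_add {G R : Type*} [AddMonoid G] [CommSemiring R] (ψ : AddChar G R)
    (a b : Prop) [Decidable a] [Decidable b] (c : R) (u v : G) :
    (if a ∧ b then c * ψ (u + v) else 0) =
      (if a then ψ u else 0) * (if b then ψ v else 0) * c := by
  by_cases ha : a <;> by_cases hb : b <;>
    simp [ha, hb, AddChar.map_add_eq_mul, mul_comm]

/-- Corollary 2.10, first bound (trilinear sums twisted by additive characters of
rational functions). -/
theorem trilinear_rational_additive (η : ℝ) (hη : 0 < η) (d₁ d₂ : ℕ)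
    (hd₁ : 0 < d₁) (hd₂ : 0 < d₂) :
    ∃ κ : ℝ, 0 < κ ∧ ∃ C : ℝ, 0 < C ∧ ∀ (p : ℕ), p.Prime →
      ∀ (χ : MulChar (ZMod p) ℂ), χ ≠ 1 →
      ∀ (ψ : AddChar (ZMod p) ℂ), ψ ≠ 1 →
      ∀ (P₁ P₂ : Polynomial (ZMod p)), P₂ ≠ 0 →
        P₁.natDegree ≤ d₁ → P₂.natDegree ≤ d₁ →
      ∀ (Q₁ Q₂ : MvPolynomial (Fin 2) (ZMod p)), Q₂ ≠ 0 →
        Q₁.totalDegree ≤ d₂ → Q₂.totalDegree ≤ d₂ →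
      ∀ (K M N : ℝ),
        (p : ℝ) ^ ((1 : ℝ) / 5 + η) ≤ K → K < (p : ℝ) ^ ((1 : ℝ) / 4 - η) →
        (p : ℝ) ^ ((1 : ℝ) / 5 + η) ≤ M → M < (p : ℝ) ^ ((1 : ℝ) / 4 - η) →
        (p : ℝ) ^ ((1 : ℝ) / 5 + η) ≤ N → N < (p : ℝ) ^ ((1 : ℝ) / 4 - η) →
      ‖∑ k ∈ Icc 1 ⌊K⌋₊, ∑ m ∈ Icc 1 ⌊M⌋₊, ∑ n ∈ Icc 1 ⌊N⌋₊,
          if Polynomial.eval (m : ZMod p) P₂ ≠ 0 ∧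
              MvPolynomial.eval ![(k : ZMod p), (n : ZMod p)] Q₂ ≠ 0 then
            χ ((k + m * n : ℕ) : ZMod p) *
              ψ (Polynomial.eval (m : ZMod p) P₁ * (Polynomial.eval (m : ZMod p) P₂)⁻¹ +
                MvPolynomial.eval ![(k : ZMod p), (n : ZMod p)] Q₁ *
                  (MvPolynomial.eval ![(k : ZMod p), (n : ZMod p)] Q₂)⁻¹)
          else 0‖ ≤ C * (K * M * N) * (p : ℝ) ^ (-κ) := by
  obtain ⟨κ, hκ, C, hC, hbound⟩ := trilinear_rational_additive_general η hη
  refine ⟨κ, hκ, C, hC, fun p hp χ hχ ψ _ P₁ P₂ _ _ _ Q₁ Q₂ _ _ _ K M N => ?_⟩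
  have : Fact p.Prime := ⟨hp⟩
  simp only [ite_and_mul_addChar_add]
  exact hbound p hp χ hχ _ _ (fun m => norm_ite_addChar_le_one ψ _ _)
    (fun k n => norm_ite_addChar_le_one ψ _ _) K M N
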